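/- arXiv:1603.07718 — 3 statements merged into one kernel-verified Lean document; each statement's English description precedes it below -/
import Mathlib

section
/- Let k be a field and let D₁, D₂ be central division k-algebras of k-dimension 4. Suppose there is a tower of finite separable field extensions k ⊆ K ⊆ K' with [K:k] odd and [K':K] = 2 such that K' splits both D₁ and D₂, i.e., Dᵢ ⊗_k K' is isomorphic as a K'-algebra to the algebra of 2×2 matrices over K' for i = 1, 2. Then there exists a separable field extension F/k of degree 2 such that D₁ ⊗_k F and D₂ ⊗_k F are both isomorphic as F-algebras to the algebra of 2×2 matrices over F. -/
open TensorProduct Polynomial Quaternion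

/-- The value of the quadratic form with coefficients `c` at a vector over a `k`-algebra. -/
def quadEval {k ι R : Type*} [Fintype ι] [CommSemiring k] [CommSemiring R] [Algebra k R]
    (c : ι → ι → k) (v : ι → R) : R :=
  ∑ i, ∑ j, algebraMap k R (c i j) * (v i * v j)

section Springer

variable {k ι : Type*} [Fintype ι] [Field k] (c : ι → ι → k)

theorem map_quadEval {R S : Type*} [CommSemiring R] [CommSemiring S] [Algebra k R] [Algebra k S]
    (φ : R →ₐ[k] S) (v : ι → R) : φ (quadEval c v) = quadEval c (fun i => φ (v i)) := by
  simp [quadEval]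

theorem quadEval_mul {R : Type*} [CommSemiring R] [Algebra k R] (a : R) (v : ι → R) :
    quadEval c (fun i => a * v i) = a ^ 2 * quadEval c v := by
  simp only [quadEval, Finset.mul_sum]
  exact Finset.sum_congr rfl fun i _ => Finset.sum_congr rfl fun j _ => by ring

theorem dvd_quadEval_mod {p : k[X]} {f : ι → k[X]} (h : p ∣ quadEval c f) :
    p ∣ quadEval c (fun i => f i % p) := by
  have key : p ∣ quadEval c f - quadEval c (fun i => f i % p) := by
    simp only [quadEval, ← Finset.sum_sub_distrib, ← mul_sub]
    refine Finset.dvd_sum fun i _ => Finset.dvd_sum fun j _ => Dvd.dvd.mul_left ?_ _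
    obtain ⟨a, ha⟩ : p ∣ f i - f i % p :=
      ⟨f i / p, by linear_combination -EuclideanDomain.div_add_mod (f i) p⟩
    obtain ⟨b, hb⟩ : p ∣ f j - f j % p :=
      ⟨f j / p, by linear_combination -EuclideanDomain.div_add_mod (f j) p⟩
    exact ⟨a * f j + f i % p * b, by linear_combination f j * ha + f i % p * hb⟩
  simpa using dvd_sub h key

theorem natDegree_quadEval_le {f : ι → k[X]} {m : ℕ} (h : ∀ i, (f i).natDegree ≤ m) :
    (quadEval c f).natDegree ≤ 2 * m := by
  refine natDegree_sum_le_of_forall_le _ _ fun i _ =>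
    natDegree_sum_le_of_forall_le _ _ fun j _ => ?_
  refine (natDegree_C_mul_le _ _).trans (natDegree_mul_le.trans ?_)
  have := h i
  have := h j
  omega

theorem coeff_quadEval {f : ι → k[X]} {m : ℕ} (h : ∀ i, (f i).natDegree ≤ m) :
    (quadEval c f).coeff (2 * m) = quadEval c (fun i => (f i).coeff m) := by
  simp only [quadEval, finsetSum_coeff, Polynomial.algebraMap_eq, coeff_C_mul, two_mul,
    coeff_mul_add_eq_of_natDegree_le (h _) (h _), Algebra.algebraMap_self, RingHom.id_apply]

theorem exists_irreducible_dvd_of_odd_natDegree (n : ℕ) :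
    ∀ h : k[X], h.natDegree = n → Odd n → ∃ p, Irreducible p ∧ Odd p.natDegree ∧ p ∣ h := by
  induction n using Nat.strong_induction_on with
  | _ n ih =>
    intro h hn hodd
    have h0 : h ≠ 0 := by rintro rfl; simp at hn; subst hn; simp at hodd
    have hu : ¬ IsUnit h := fun hu => by
      rw [natDegree_eq_zero_of_isUnit hu] at hn; subst hn; simp at hodd
    obtain ⟨p, hp, q, rfl⟩ := WfDvdMonoid.exists_irreducible_factor hu h0
    have hq0 : q ≠ 0 := right_ne_zero_of_mul h0
    rw [natDegree_mul hp.ne_zero hq0] at hn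
    by_cases hpo : Odd p.natDegree
    · exact ⟨p, hp, hpo, dvd_mul_right _ _⟩
    have hpp := hp.natDegree_pos
    obtain ⟨r, hr, hro, hrd⟩ := ih q.natDegree (by omega) q rfl (by
      rw [← hn, Nat.odd_add'] at hodd
      exact hodd.mpr (Nat.not_odd_iff_even.mp hpo))
    exact ⟨r, hr, hro, hrd.mul_left _⟩

/-- The Springer theorem for an irreducible polynomial of odd degree. -/
theorem dvd_of_dvd_quadEval (hc : ∀ v : ι → k, quadEval c v = 0 → v = 0) (n : ℕ) :
    ∀ p : k[X], Irreducible p → p.natDegree = n → Odd n →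
      ∀ f : ι → k[X], p ∣ quadEval c f → ∀ i, p ∣ f i := by
  induction n using Nat.strong_induction_on with
  | _ n ih =>
    intro p hp hn hodd
    have inner : ∀ m < n, ∀ g : ι → k[X], (∀ i, (g i).natDegree ≤ m) → p ∣ quadEval c g →
        ∀ i, g i = 0 := by
      intro m
      induction m with
      | zero =>
        intro hm g hg hd i
        have hq : quadEval c g = 0 := by
          refine eq_zero_of_dvd_of_natDegree_lt hd ?_
          have := natDegree_quadEval_le c hg
          omega
        have hv := hc _ ((coeff_quadEval c hg).symm.trans (by rw [hq, coeff_zero]))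
        rw [eq_C_of_natDegree_le_zero (hg i)]
        simpa using congrFun hv i
      | succ m ihm =>
        intro hm g hg hd
        by_cases hv : (fun i => (g i).coeff (m + 1)) = 0
        · exact ihm (by omega) g (fun i => by
            by_contra! hlt
            have heq : (g i).natDegree = m + 1 := le_antisymm (hg i) hlt
            have hz := congrFun hv i
            simp only [Pi.zero_apply, ← heq, coeff_natDegree, leadingCoeff_eq_zero] at hz
            simp [hz] at heq) hd
        have hco : (quadEval c g).coeff (2 * (m + 1)) ≠ 0 := fun h0 =>
          hv (hc _ ((coeff_quadEval c hg).symm.trans h0))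
        have hdeg := natDegree_eq_of_le_of_coeff_ne_zero (natDegree_quadEval_le c hg) hco
        obtain ⟨h, hh⟩ := hd
        have hh0 : h ≠ 0 := by rintro rfl; simp [hh] at hco
        rw [hh, natDegree_mul hp.ne_zero hh0, hn] at hdeg
        obtain ⟨r, hr, hro, hrh⟩ := exists_irreducible_dvd_of_odd_natDegree _ h rfl (by
          obtain ⟨s, rfl⟩ := hodd
          exact ⟨m - s, by omega⟩)
        have hrle := natDegree_le_of_dvd hrh hh0
        have hrg := ih r.natDegree (by omega) r hr rfl hro g (hh ▸ hrh.mul_left p)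
        choose g' hg' using hrg
        have hpr : ¬ p ∣ r := fun hdvd => by
          have := natDegree_le_of_dvd hdvd hr.ne_zero
          omega
        have hd' : p ∣ r ^ 2 * quadEval c g' := by
          rw [← quadEval_mul, ← funext hg']
          exact ⟨h, hh⟩
        have hz := ihm (by omega) g' (fun i => by
          by_cases h0 : g' i = 0
          · simp [h0]
          have := hg i
          rw [hg' i, natDegree_mul hr.ne_zero h0] at this
          have := hr.natDegree_pos
          omega) ((hp.prime.dvd_or_dvd hd').resolve_left fun h => hpr (hp.prime.dvd_of_dvd_pow h))
        intro i
        rw [hg' i, hz i, mul_zero]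
    intro f hf i
    have hpos := hp.natDegree_pos
    refine EuclideanDomain.mod_eq_zero.mp (inner (n - 1) (by omega) (fun i => f i % p)
      (fun i => ?_) (dvd_quadEval_mod c hf) i)
    have := natDegree_mod_lt (f i) (q := p) (by omega)
    omega

/-- The Springer theorem: an anisotropic quadratic form remains anisotropic over a separable
extension of odd degree. -/
theorem quadEval_anisotropic_of_odd_finrank (hc : ∀ v : ι → k, quadEval c v = 0 → v = 0)
    {K : Type*} [Field K] [Algebra k K] [FiniteDimensional k K] [Algebra.IsSeparable k K]
    (hodd : Odd (Module.finrank k K)) (v : ι → K) (hv : quadEval c v = 0) : v = 0 := by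
  obtain ⟨α, hα⟩ := Field.exists_primitive_element k K
  have hint : IsIntegral k α := .of_finite k α
  have hdeg : (minpoly k α).natDegree = Module.finrank k K :=
    (Field.primitive_element_iff_minpoly_natDegree_eq k α).mp hα
  have hsurj : ∀ x : K, ∃ f : k[X], aeval α f = x := fun x => by
    have hx : x ∈ Algebra.adjoin k {α} := by
      rw [← IntermediateField.adjoin_simple_toSubalgebra_of_isAlgebraic hint.isAlgebraic, hα]
      trivial
    rwa [Algebra.adjoin_singleton_eq_range_aeval] at hx
  choose f hf using fun i => hsurj (v i)
  have hdvd : minpoly k α ∣ quadEval c f := by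
    rw [minpoly.dvd_iff, map_quadEval]
    simpa only [hf] using hv
  funext i
  rw [← hf i]
  exact (minpoly.dvd_iff).mp
    (dvd_of_dvd_quadEval c hc _ _ (minpoly.irreducible hint) hdeg hodd f hdvd i)

end Springer

section Structure

variable {k D : Type*} [Field k] [DivisionRing D] [Algebra k D] [Algebra.IsCentral k D]

theorem mem_bot_of_forall_mul_comm {x : D} (h : ∀ y, y * x = x * y) :
    x ∈ (⊥ : Subalgebra k D) :=
  Algebra.IsCentral.out (Subalgebra.mem_center_iff.mpr h)

theorem natDegree_minpoly_eq_two (hD : Module.finrank k D = 4) {x : D}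
    (hx : x ∉ (⊥ : Subalgebra k D)) : (minpoly k x).natDegree = 2 := by
  have : FiniteDimensional k D := .of_finrank_pos (by omega)
  have hint : IsIntegral k x := .of_finite k x
  obtain ⟨y, hy⟩ : ∃ y, y * x ≠ x * y := by
    by_contra! h
    exact hx (mem_bot_of_forall_mul_comm h)
  refine le_antisymm ?_ ((minpoly.two_le_natDegree_iff hint).mpr fun h => hx ?_)
  · by_contra! hlt
    let φ : degreeLT k 3 × degreeLT k 3 →ₗ[k] D :=
      ((aeval x).toLinearMap ∘ₗ (degreeLT k 3).subtype).coprod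
        (LinearMap.mulRight k y ∘ₗ (aeval x).toLinearMap ∘ₗ (degreeLT k 3).subtype)
    have hzero : ∀ f ∈ degreeLT k 3, aeval x f = 0 → f = 0 := fun f hf h0 => by
      by_contra hne
      have h1 := minpoly.degree_le_of_ne_zero k x hne h0
      rw [mem_degreeLT] at hf
      have h2 := natDegree_le_natDegree h1
      have h3 := (natDegree_lt_iff_degree_lt hne).mpr hf
      omega
    have hcomm : ∀ f : k[X], Commute (aeval x f) x := fun f => by
      simpa using (Commute.all f X).map (aeval x)
    have hinj : Function.Injective φ := by
      rw [← LinearMap.ker_eq_bot, LinearMap.ker_eq_bot']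
      rintro ⟨⟨f, hf⟩, ⟨g, hg⟩⟩ h
      have h' : aeval x f + aeval x g * y = 0 := h
      have hg0 : aeval x g = 0 := by
        by_contra hne
        have hyeq : y = (aeval x g)⁻¹ * -aeval x f := by
          rw [eq_inv_mul_iff_mul_eq₀ hne]
          exact (neg_eq_of_add_eq_zero_right h').symm
        apply hy
        rw [hyeq]
        exact (((hcomm g).inv_left₀).mul_left (hcomm f).neg_left).eq
      rw [hg0, zero_mul, add_zero] at h'
      simp [hzero f hf h', hzero g hg hg0]
    have hle := LinearMap.finrank_le_finrank_of_injective hinj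
    rw [Module.finrank_prod, (degreeLTEquiv k 3).finrank_eq, Module.finrank_fin_fun, hD] at hle
    omega
  · obtain ⟨a, rfl⟩ := h
    exact Subalgebra.algebraMap_mem _ a

/-- A four-dimensional central division algebra has a noncentral element of trace one. -/
theorem exists_mul_self_eq_add (hD : Module.finrank k D = 4) :
    ∃ (i : D) (a : k), i ∉ (⊥ : Subalgebra k D) ∧ i * i = a • (1 : D) + i := by
  have : FiniteDimensional k D := .of_finrank_pos (by omega)
  obtain ⟨x, hx, hsep⟩ := JacobsonNoether.exists_separable_and_not_isCentral' (L := k) (D := D)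
    (fun h => by
      have := Subalgebra.finrank_bot (F := k) (E := D)
      rw [h, (Subalgebra.topEquiv (R := k) (A := D)).toLinearEquiv.finrank_eq] at this
      omega)
  have hdeg := natDegree_minpoly_eq_two hD hx
  have hmon : (minpoly k x).coeff 2 = 1 := hdeg ▸ (minpoly.monic (.of_finite k x)).coeff_natDegree
  obtain ⟨b, hb⟩ : ∃ b, (minpoly k x).coeff 1 = b := ⟨_, rfl⟩
  obtain ⟨c, hc⟩ : ∃ c, (minpoly k x).coeff 0 = c := ⟨_, rfl⟩
  have hpoly : minpoly k x = X ^ 2 + C b * X + C c := by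
    rw [(minpoly k x).as_sum_range' 3 (by omega)]
    simp [Finset.sum_range_succ, hmon, hb, hc, ← C_mul_X_pow_eq_monomial]
    ring
  have hxx : x * x = -(b • x) - c • (1 : D) := by
    have h := minpoly.aeval k x
    rw [hpoly] at h
    simp only [map_add, map_pow, aeval_X, map_mul, aeval_C, Algebra.algebraMap_eq_smul_one,
      smul_mul_assoc, one_mul] at h
    rw [← sq, ← sub_eq_zero, ← h]
    abel
  by_cases hb0 : b = 0
  · have h2 : (2 : k) ≠ 0 := fun h2 => by
      have h := (separable_iff_derivative_ne_zero (minpoly.irreducible (.of_finite k x))).mp hsep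
      rw [hpoly, hb0] at h
      apply h
      simp only [map_zero, zero_mul, add_zero, derivative_add, derivative_X_pow, derivative_C]
      simp [h2]
    refine ⟨x + (2⁻¹ : k) • 1, -c - 4⁻¹, fun h => hx ?_, ?_⟩
    · have := sub_mem h (Subalgebra.smul_mem _ (one_mem (⊥ : Subalgebra k D)) (2⁻¹ : k))
      simpa using this
    · simp only [add_mul, mul_add, smul_mul_assoc, mul_smul_comm, one_mul, mul_one, hxx, hb0]
      have h4 : (4 : k) ≠ 0 := by
        rw [show (4 : k) = 2 * 2 by norm_num]
        exact mul_ne_zero h2 h2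
      match_scalars <;> field_simp <;> ring
  · refine ⟨(-b⁻¹ : k) • x, -c * (b⁻¹) ^ 2, fun h => hx ?_, ?_⟩
    · have := Subalgebra.smul_mem _ h (-b)
      rwa [smul_smul, neg_mul_neg, mul_inv_cancel₀ hb0, one_smul] at this
    · simp only [smul_mul_assoc, mul_smul_comm, hxx]
      match_scalars <;> field_simp

/-- A four-dimensional central division algebra is a quaternion algebra. -/
theorem exists_algEquiv_quaternionAlgebra (hD : Module.finrank k D = 4) :
    ∃ a c : k, Nonempty (ℍ[k, a, 1, c] ≃ₐ[k] D) := by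
  have : FiniteDimensional k D := .of_finrank_pos (by omega)
  obtain ⟨i, a, hi, hii⟩ := exists_mul_self_eq_add hD
  obtain ⟨y, hy⟩ : ∃ y, y * i ≠ i * y := by
    by_contra! h
    exact hi (mem_bot_of_forall_mul_comm h)
  obtain ⟨j, hj⟩ : ∃ j, j = i * y - y * i := ⟨_, rfl⟩
  have hj0 : j ≠ 0 := fun h => hy (sub_eq_zero.mp (hj.symm.trans h)).symm
  have hji : j * i = j - i * j := by
    have e1 : y * i * i = a • y + y * i := by rw [mul_assoc, hii, mul_add, mul_smul_comm, mul_one]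
    have e2 : i * (i * y) = a • y + i * y := by
      rw [← mul_assoc, hii, add_mul, smul_mul_assoc, one_mul]
    rw [hj, sub_mul, mul_sub, e1, e2, mul_assoc]
    abel
  have hindep : ∀ s t : k, s • (1 : D) + t • i = 0 → s = 0 ∧ t = 0 := fun s t h => by
    have ht : t = 0 := by
      by_contra ht
      apply hi
      have : i = algebraMap k D (-(t⁻¹ * s)) := by
        rw [Algebra.algebraMap_eq_smul_one, neg_smul, mul_smul, eq_neg_iff_add_eq_zero]
        have := congrArg (t⁻¹ • ·) h
        simpa [smul_add, smul_smul, ht, add_comm] using this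
      rw [this]
      exact Subalgebra.algebraMap_mem _ _
    subst ht
    simpa using h
  have htwo : 2 * i - 1 ≠ 0 := fun h => by
    have h' := (hindep (-1) 2 (by rw [← h, two_smul, two_mul, neg_one_smul]; abel)).1
    simp at h'
  let φ : (Fin 4 → k) →ₗ[k] D := Fintype.linearCombination k ![1, i, j, i * j]
  have hφ : ∀ v, φ v = v 0 • (1 : D) + v 1 • i + v 2 • j + v 3 • (i * j) := fun v => by
    simp [φ, Fintype.linearCombination_apply, Fin.sum_univ_four]
  have hinj : Function.Injective φ := by
    rw [← LinearMap.ker_eq_bot, LinearMap.ker_eq_bot']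
    intro v hv
    rw [hφ] at hv
    have hcomm : (v 2 • (1 : D) + v 3 • i) * ((2 * i - 1) * j) = 0 := by
      have h1 : i * (v 0 • (1 : D) + v 1 • i + v 2 • j + v 3 • (i * j)) -
        (v 0 • (1 : D) + v 1 • i + v 2 • j + v 3 • (i * j)) * i = 0 := by simp [hv]
      rw [← h1]
      simp only [mul_add, add_mul, mul_sub, sub_mul, smul_mul_assoc, mul_smul_comm, one_mul,
        mul_one, two_mul, mul_assoc, hji, smul_sub]
      abel
    have h23 := hindep _ _ ((mul_eq_zero.mp hcomm).resolve_right (mul_ne_zero htwo hj0))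
    rw [h23.1, h23.2, zero_smul, zero_smul, add_zero, add_zero] at hv
    have h01 := hindep _ _ hv
    ext n
    fin_cases n <;> simp [h01, h23]
  have hsurj : Function.Surjective φ :=
    (LinearMap.injective_iff_surjective_of_finrank_eq_finrank (by simp [hD])).mp hinj
  have hjj : j * j ∈ (⊥ : Subalgebra k D) := mem_bot_of_forall_mul_comm (k := k) fun z => by
    have hci : Commute i (j * j) := by
      change i * (j * j) = j * j * i
      rw [mul_assoc, hji, mul_sub, ← mul_assoc j i, hji, sub_mul, sub_sub_cancel, mul_assoc]
    have hcj : Commute j (j * j) := by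
      change j * (j * j) = j * j * j
      rw [mul_assoc]
    obtain ⟨v, rfl⟩ := hsurj z
    rw [hφ]
    exact ((((Commute.one_left _).smul_left _).add_left (hci.smul_left _)).add_left
      (hcj.smul_left _)).add_left ((hci.mul_left hcj).smul_left _)
  obtain ⟨c, hc⟩ := Algebra.mem_bot.mp hjj
  let B : QuaternionAlgebra.Basis D a 1 c :=
    { i := i
      j := j
      k := i * j
      i_mul_i := by rw [hii, one_smul]
      j_mul_j := by rw [← hc, Algebra.algebraMap_eq_smul_one]
      i_mul_j := rfl
      j_mul_i := by rw [hji, one_smul] }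
  refine ⟨a, c, ⟨AlgEquiv.ofBijective B.liftHom ?_⟩⟩
  have hs : Function.Surjective B.liftHom := fun z => by
    obtain ⟨v, rfl⟩ := hsurj z
    refine ⟨⟨v 0, v 1, v 2, v 3⟩, ?_⟩
    simp [hφ, QuaternionAlgebra.Basis.lift, B, Algebra.algebraMap_eq_smul_one]
  exact ⟨(LinearMap.injective_iff_surjective_of_finrank_eq_finrank (f := B.liftHom.toLinearMap)
    (by rw [QuaternionAlgebra.finrank_eq_four, hD])).mpr hs, hs⟩

end Structure

section Splitting

/-- The reduced norm of `x + y i + z j + w i j` in `ℍ[R, a, 1, c]`. -/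
def quatNorm {R : Type*} [CommRing R] (a c x y z w : R) : R :=
  x ^ 2 + x * y - a * y ^ 2 - c * (z ^ 2 + z * w - a * w ^ 2)

theorem star_mul_self_eq_quatNorm {R : Type*} [CommRing R] {a c : R} (q : ℍ[R, a, 1, c]) :
    star q * q = algebraMap R _ (quatNorm a c q.re q.imI q.imJ q.imK) := by
  ext <;> simp [quatNorm, QuaternionAlgebra.algebraMap_eq] <;> ring

variable {k : Type*} [Field k]

theorem quatNorm_anisotropic {D : Type*} [DivisionRing D] [Algebra k D] {a c : k}
    (e : ℍ[k, a, 1, c] ≃ₐ[k] D) {x y z w : k} (h : quatNorm a c x y z w = 0) :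
    x = 0 ∧ y = 0 ∧ z = 0 ∧ w = 0 := by
  have hq := star_mul_self_eq_quatNorm (⟨x, y, z, w⟩ : ℍ[k, a, 1, c])
  rw [h, map_zero] at hq
  have hq0 : (⟨x, y, z, w⟩ : ℍ[k, a, 1, c]) = 0 := by
    have := congrArg e hq
    rw [map_mul, map_zero, mul_eq_zero, map_eq_zero_iff e e.injective,
      map_eq_zero_iff e e.injective, star_eq_zero] at this
    exact this.elim id id
  simpa [QuaternionAlgebra.ext_iff] using hq0

variable {F : Type*} [Field F] [Algebra k F]

/-- Extension of scalars of a quaternion algebra. -/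
noncomputable def quaternionBaseChangeHom (a c : k) :
    F ⊗[k] ℍ[k, a, 1, c] →ₐ[F] ℍ[F, algebraMap k F a, 1, algebraMap k F c] :=
  Algebra.TensorProduct.lift (Algebra.ofId F _)
    (QuaternionAlgebra.Basis.liftHom
      { i := ⟨0, 1, 0, 0⟩
        j := ⟨0, 0, 1, 0⟩
        k := ⟨0, 0, 0, 1⟩
        i_mul_i := by ext <;> simp [Algebra.algebraMap_eq_smul_one]
        j_mul_j := by ext <;> simp [Algebra.algebraMap_eq_smul_one]
        i_mul_j := by ext <;> simp
        j_mul_i := by ext <;> simp })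
    (fun x _ => Algebra.commutes x _)

theorem quaternionBaseChangeHom_tmul (a c : k) (s : F) (q : ℍ[k, a, 1, c]) :
    quaternionBaseChangeHom a c (s ⊗ₜ[k] q) = s • ⟨algebraMap k F q.re, algebraMap k F q.imI,
      algebraMap k F q.imJ, algebraMap k F q.imK⟩ := by
  refine (Algebra.TensorProduct.lift_tmul _ _ _ _ _).trans ?_
  rw [Algebra.ofId_apply, ← Algebra.smul_def]
  congr 1
  ext <;> simp [QuaternionAlgebra.Basis.lift, Algebra.algebraMap_eq_smul_one]

theorem quaternionBaseChangeHom_bijective (a c : k) :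
    Function.Bijective (quaternionBaseChangeHom (F := F) a c) := by
  have hs : Function.Surjective (quaternionBaseChangeHom (F := F) a c) := fun q => by
    refine ⟨q.re ⊗ₜ 1 + q.imI ⊗ₜ ⟨0, 1, 0, 0⟩ + q.imJ ⊗ₜ ⟨0, 0, 1, 0⟩ + q.imK ⊗ₜ ⟨0, 0, 0, 1⟩, ?_⟩
    simp only [map_add, quaternionBaseChangeHom_tmul]
    ext <;> simp
  exact ⟨(LinearMap.injective_iff_surjective_of_finrank_eq_finrank
    (f := (quaternionBaseChangeHom (F := F) a c).toLinearMap)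
    (by rw [Module.finrank_baseChange, QuaternionAlgebra.finrank_eq_four,
      QuaternionAlgebra.finrank_eq_four])).mpr hs, hs⟩

/-- Extension of scalars of an algebra identified with a quaternion algebra. -/
noncomputable def baseChangeEquivQuaternion {D : Type*} [Ring D] [Algebra k D] {a c : k}
    (e : ℍ[k, a, 1, c] ≃ₐ[k] D) :
    F ⊗[k] D ≃ₐ[F] ℍ[F, algebraMap k F a, 1, algebraMap k F c] :=
  (Algebra.TensorProduct.congr AlgEquiv.refl e.symm).trans
    (AlgEquiv.ofBijective _ (quaternionBaseChangeHom_bijective a c))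

theorem exists_quatNorm_eq_zero_of_algEquiv_matrix {a c : F}
    (e : ℍ[F, a, 1, c] ≃ₐ[F] Matrix (Fin 2) (Fin 2) F) :
    ∃ x y z w : F, ¬ (x = 0 ∧ y = 0 ∧ z = 0 ∧ w = 0) ∧ quatNorm a c x y z w = 0 := by
  obtain ⟨q, hq⟩ := e.surjective !![0, 1; 0, 0]
  have hq0 : q ≠ 0 := by
    rintro rfl
    have := congrFun (congrFun hq 0) 1
    simp at this
  have hqq : q * q = 0 := by
    apply e.injective
    rw [map_mul, hq, map_zero]
    ext i j
    fin_cases i <;> fin_cases j <;> simp [Matrix.mul_apply]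
  refine ⟨q.re, q.imI, q.imJ, q.imK, fun h => hq0 (by ext <;> simp [h]), ?_⟩
  have h := congrArg (star q * ·) hqq
  simp only [mul_zero, ← mul_assoc, star_mul_self_eq_quatNorm, ← Algebra.smul_def,
    smul_eq_zero] at h
  exact h.resolve_right hq0

theorem exists_norm_eq_of_quatNorm_eq_zero {a c : F} (ha : 1 + 4 * a ≠ 0) {x y z w : F}
    (h0 : ¬ (x = 0 ∧ y = 0 ∧ z = 0 ∧ w = 0)) (h : quatNorm a c x y z w = 0) :
    ∃ s t : F, s ^ 2 + s * t - a * t ^ 2 = c := by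
  have of_root : ∀ r : F, r ^ 2 - r - a = 0 → ∃ s t : F, s ^ 2 + s * t - a * t ^ 2 = c := by
    intro r hr
    have hr2 : 2 * r - 1 ≠ 0 := fun h2 => ha (by linear_combination (2 * r - 1) * h2 - 4 * hr)
    refine ⟨c - (c - 1) / (2 * r - 1) * r, (c - 1) / (2 * r - 1), ?_⟩
    field_simp
    linear_combination (c - 1) ^ 2 * hr
  have of_binary : ∀ u v : F, u ^ 2 + u * v - a * v ^ 2 = 0 → ¬ (u = 0 ∧ v = 0) →
      ∃ s t : F, s ^ 2 + s * t - a * t ^ 2 = c := by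
    intro u v huv hne
    have hv : v ≠ 0 := fun hv => hne ⟨by simpa [hv] using huv, hv⟩
    refine of_root (-(u / v)) ?_
    field_simp
    linear_combination huv
  unfold quatNorm at h
  obtain ⟨n, hn⟩ : ∃ n, n = z ^ 2 + z * w - a * w ^ 2 := ⟨_, rfl⟩
  rw [← hn] at h
  by_cases hzw : n = 0
  · by_cases hzw0 : z = 0 ∧ w = 0
    · exact of_binary x y (by linear_combination h + c * hzw) (by tauto)
    · exact of_binary z w (hn ▸ hzw) hzw0
  · refine ⟨(x * (z + w) - a * y * w) / n,
      (y * z - x * w) / n, ?_⟩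
    field_simp
    linear_combination n * h - (x ^ 2 + x * y - a * y ^ 2) * hn

theorem nonempty_algEquiv_matrix_of_norm_eq {a c : F} (ha : 1 + 4 * a ≠ 0) (hc : c ≠ 0) {s t : F}
    (h : s ^ 2 + s * t - a * t ^ 2 = c) :
    Nonempty (ℍ[F, a, 1, c] ≃ₐ[F] Matrix (Fin 2) (Fin 2) F) := by
  let B : QuaternionAlgebra.Basis (Matrix (Fin 2) (Fin 2) F) a 1 c :=
    { i := !![0, a; 1, 1]
      j := !![s, s - a * t; t, -s]
      k := !![a * t, -a * s; s + t, -a * t]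
      i_mul_i := by
        ext i j; fin_cases i <;> fin_cases j <;> simp
      j_mul_j := by
        ext i j; fin_cases i <;> fin_cases j <;> simp [← h] <;> ring
      i_mul_j := by
        ext i j; fin_cases i <;> fin_cases j <;> simp <;> ring
      j_mul_i := by
        ext i j; fin_cases i <;> fin_cases j <;> simp <;> ring }
  have hi : Function.Injective B.liftHom := by
    rw [injective_iff_map_eq_zero]
    rintro ⟨x, y, z, w⟩ hq
    have e (i j) := congrFun (congrFun hq i) j
    have h00 := e 0 0
    have h01 := e 0 1
    have h10 := e 1 0
    have h11 := e 1 1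
    simp [B, QuaternionAlgebra.Basis.lift, Matrix.algebraMap_matrix_apply] at h00 h01 h10 h11
    have hx : x = 0 := by
      refine (mul_eq_zero.mp (?_ : (1 + 4 * a) * x = 0)).resolve_left ha
      linear_combination (1 + 2 * a) * h00 + 2 * a * h11 - h01 - a * h10
    have hy : y = 0 := by linear_combination h00 + h11 - 2 * hx
    have hz : z = 0 := by
      refine (mul_eq_zero.mp (?_ : c * z = 0)).resolve_left hc
      linear_combination (s + t) * (h00 - hx) - a * t * (h10 - hy) - z * h
    have hw : w = 0 := by
      refine (mul_eq_zero.mp (?_ : c * w = 0)).resolve_left hc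
      linear_combination s * (h10 - hy) - t * (h00 - hx) - w * h
    ext <;> simp [hx, hy, hz, hw]
  exact ⟨AlgEquiv.ofBijective B.liftHom ⟨hi,
    (LinearMap.injective_iff_surjective_of_finrank_eq_finrank (f := B.liftHom.toLinearMap)
      (by simp [QuaternionAlgebra.finrank_eq_four, Module.finrank_matrix])).mp hi⟩⟩

end Splitting

section CommonSlot

/-- The coefficients of the reduced norm form of `ℍ[k, a, 1, c]`. -/
def quatNormCoeff {k : Type*} [CommRing k] (a c : k) : Fin 4 → Fin 4 → k :=
  ![![1, 1, 0, 0], ![0, -a, 0, 0], ![0, 0, -c, -c], ![0, 0, 0, c * a]]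

/-- The coefficients of the Albert form of `ℍ[k, a₁, 1, c₁]` and `ℍ[k, a₂, 1, c₂]`, the difference
of the norms on the pairs of quaternions of equal trace, modulo scalars. -/
def albertCoeff {k : Type*} [CommRing k] (a₁ c₁ a₂ c₂ : k) : Fin 6 → Fin 6 → k :=
  ![![1 + 4 * a₂, 1 + 4 * a₂, 0, 0, 0, 0], ![0, a₂ - a₁, 0, 0, 0, 0], ![0, 0, -c₁, -c₁, 0, 0],
    ![0, 0, 0, c₁ * a₁, 0, 0], ![0, 0, 0, 0, c₂, c₂], ![0, 0, 0, 0, 0, -(c₂ * a₂)]]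

variable {k K : Type*} [Field k] [Field K] [Algebra k K]

theorem quadEval_quatNormCoeff (a c : k) (v : Fin 4 → K) :
    quadEval (quatNormCoeff a c) v =
      quatNorm (algebraMap k K a) (algebraMap k K c) (v 0) (v 1) (v 2) (v 3) := by
  simp [quadEval, quatNormCoeff, quatNorm, Fin.sum_univ_four]
  ring

theorem quadEval_albertCoeff (a₁ c₁ a₂ c₂ : k) (v : Fin 6 → K) :
    quadEval (albertCoeff a₁ c₁ a₂ c₂) v =
      quatNorm (algebraMap k K a₁) (algebraMap k K c₁) (v 0) (v 1) (v 2) (v 3) -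
      quatNorm (algebraMap k K a₂) (algebraMap k K c₂) 0 (2 * v 0 + v 1) (v 4) (v 5) := by
  simp [quadEval, albertCoeff, quatNorm, Fin.sum_univ_six, map_ofNat (algebraMap k K) 4]
  ring

theorem quatNorm_anisotropic_of_odd_finrank [FiniteDimensional k K] [Algebra.IsSeparable k K]
    (hodd : Odd (Module.finrank k K)) {a c : k}
    (hk : ∀ x y z w : k, quatNorm a c x y z w = 0 → x = 0 ∧ y = 0 ∧ z = 0 ∧ w = 0)
    (x y z w : K) (h : quatNorm (algebraMap k K a) (algebraMap k K c) x y z w = 0) :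
    x = 0 ∧ y = 0 ∧ z = 0 ∧ w = 0 := by
  have hv := quadEval_anisotropic_of_odd_finrank (quatNormCoeff a c) (fun v hv => by
    rw [quadEval_quatNormCoeff] at hv
    obtain ⟨h0, h1, h2, h3⟩ := hk _ _ _ _ hv
    ext n
    fin_cases n <;> assumption) hodd ![x, y, z, w] (by simpa [quadEval_quatNormCoeff] using h)
  simpa using hv

/-- A quaternion algebra over `K` that splits over a quadratic extension contains an element with
the same trace and norm as a given generator of the extension. -/
theorem exists_trace_norm_eq_of_isotropic {K' : Type*} [Field K'] [Algebra K K'] {θ : K'} {t n : K}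
    (hθ : ∀ r s : K, algebraMap K K' r + algebraMap K K' s * θ = 0 → r = 0 ∧ s = 0)
    (hspan : ∀ x : K', ∃ r s : K, x = algebraMap K K' r + algebraMap K K' s * θ)
    (hθθ : θ ^ 2 = algebraMap K K' t * θ - algebraMap K K' n) {a c : K}
    (hK : ∀ x y z w : K, quatNorm a c x y z w = 0 → x = 0 ∧ y = 0 ∧ z = 0 ∧ w = 0)
    (hK' : ∃ x y z w : K', ¬ (x = 0 ∧ y = 0 ∧ z = 0 ∧ w = 0) ∧
      quatNorm (algebraMap K K' a) (algebraMap K K' c) x y z w = 0) :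
    ∃ x y z w : K, 2 * x + y = t ∧ quatNorm a c x y z w = n := by
  obtain ⟨z₀, z₁, z₂, z₃, hne, hz⟩ := hK'
  obtain ⟨x₀, y₀, rfl⟩ := hspan z₀
  obtain ⟨x₁, y₁, rfl⟩ := hspan z₁
  obtain ⟨x₂, y₂, rfl⟩ := hspan z₂
  obtain ⟨x₃, y₃, rfl⟩ := hspan z₃
  obtain ⟨m, hm⟩ : ∃ m, quatNorm a c y₀ y₁ y₂ y₃ = m := ⟨_, rfl⟩
  have hsplit := hθ (quatNorm a c x₀ x₁ x₂ x₃ - n * quatNorm a c y₀ y₁ y₂ y₃)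
    (2 * x₀ * y₀ + x₀ * y₁ + x₁ * y₀ - 2 * a * x₁ * y₁ -
      c * (2 * x₂ * y₂ + x₂ * y₃ + x₃ * y₂ - 2 * a * x₃ * y₃) +
      t * quatNorm a c y₀ y₁ y₂ y₃) (by
    rw [← hz]
    simp only [quatNorm, map_add, map_sub, map_mul, map_pow, map_ofNat]
    linear_combination (-algebraMap K K' y₀ ^ 2 - algebraMap K K' y₀ * algebraMap K K' y₁ +
      algebraMap K K' a * algebraMap K K' y₁ ^ 2 + algebraMap K K' c * (algebraMap K K' y₂ ^ 2 +
      algebraMap K K' y₂ * algebraMap K K' y₃ -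
      algebraMap K K' a * algebraMap K K' y₃ ^ 2)) * hθθ)
  rw [hm] at hsplit
  by_cases hm0 : m = 0
  · obtain ⟨rfl, rfl, rfl, rfl⟩ := hK _ _ _ _ (hm.trans hm0)
    obtain ⟨rfl, rfl, rfl, rfl⟩ := hK x₀ x₁ x₂ x₃ (by simpa [hm0] using hsplit.1)
    simp at hne
  obtain ⟨hnorm, htrace⟩ := hsplit
  refine ⟨-(x₀ * (y₀ + y₁) - a * x₁ * y₁ - c * (x₂ * (y₂ + y₃) - a * x₃ * y₃)) / m,
    -(x₁ * y₀ - x₀ * y₁ - c * (x₃ * y₂ - x₂ * y₃)) / m,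
    -(x₂ * y₀ + a * x₃ * y₁ - x₀ * y₂ - a * x₁ * y₃) / m,
    -(x₂ * y₁ + x₃ * y₀ + x₃ * y₁ - x₀ * y₃ - x₁ * y₂ - x₁ * y₃) / m, ?_, ?_⟩
  · field_simp
    linear_combination -htrace
  · unfold quatNorm at *
    field_simp
    linear_combination m * hnorm + (x₀ ^ 2 + x₀ * x₁ - a * x₁ ^ 2 -
      c * (x₂ ^ 2 + x₂ * x₃ - a * x₃ ^ 2)) * hm

theorem exists_isotropic_of_two_eq_zero (h2 : (2 : k) = 0) {a₁ c₁ a₂ c₂ x z₁ w₁ z₂ w₂ : k}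
    (hc₁ : c₁ ≠ 0) (hc₂ : c₂ ≠ 0) (hne : ¬ (x = 0 ∧ z₁ = 0 ∧ w₁ = 0 ∧ z₂ = 0 ∧ w₂ = 0))
    (h : quatNorm a₁ c₁ x 0 z₁ w₁ = quatNorm a₂ c₂ 0 0 z₂ w₂) :
    ∃ x z₁ w₁ z₂ w₂ : k, quatNorm a₁ c₁ x 1 z₁ w₁ = quatNorm a₂ c₂ 0 1 z₂ w₂ := by
  unfold quatNorm at *
  obtain ⟨p₁, q₁, p₂, q₂, hpq⟩ : ∃ p₁ q₁ p₂ q₂ : k,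
      c₁ * (z₁ * q₁ + w₁ * p₁) + c₂ * (z₂ * q₂ + w₂ * p₂) = 1 - x := by
    by_cases hz₁ : z₁ = 0
    · by_cases hw₁ : w₁ = 0
      · by_cases hz₂ : z₂ = 0
        · by_cases hw₂ : w₂ = 0
          · subst hz₁ hw₁ hz₂ hw₂
            exact absurd (by simpa using h) hne
          · exact ⟨0, 0, (1 - x) / (c₂ * w₂), 0, by field_simp; ring⟩
        · exact ⟨0, 0, 0, (1 - x) / (c₂ * z₂), by field_simp; ring⟩
      · exact ⟨(1 - x) / (c₁ * w₁), 0, 0, 0, by field_simp; ring⟩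
    · exact ⟨0, (1 - x) / (c₁ * z₁), 0, 0, by field_simp; ring⟩
  obtain ⟨l, hl⟩ : ∃ l, l = -a₁ + a₂ - c₁ * (p₁ ^ 2 + p₁ * q₁ - a₁ * q₁ ^ 2) +
    c₂ * (p₂ ^ 2 + p₂ * q₂ - a₂ * q₂ ^ 2) := ⟨_, rfl⟩
  refine ⟨l * x, p₁ + l * z₁, q₁ + l * w₁, p₂ + l * z₂, q₂ + l * w₂, ?_⟩
  linear_combination l ^ 2 * h - hl - l * hpq + l * (c₂ * (z₂ * q₂ + w₂ * p₂) + x -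
    c₁ * (z₁ * p₁ - a₁ * w₁ * q₁) + c₂ * (z₂ * p₂ - a₂ * w₂ * q₂)) * h2

/-- Two quaternion algebras that split over a quadratic extension of an odd degree extension
contain noncentral elements with the same trace and norm. In characteristic two the trace can be
taken to be nonzero. -/
theorem exists_common_trace_norm [FiniteDimensional k K] [Algebra.IsSeparable k K]
    (hodd : Odd (Module.finrank k K)) {K' : Type*} [Field K'] [Algebra K K']
    (hKK' : Module.finrank K K' = 2) {a₁ c₁ a₂ c₂ : k}
    (h₁ : ∀ x y z w : k, quatNorm a₁ c₁ x y z w = 0 → x = 0 ∧ y = 0 ∧ z = 0 ∧ w = 0)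
    (h₂ : ∀ x y z w : k, quatNorm a₂ c₂ x y z w = 0 → x = 0 ∧ y = 0 ∧ z = 0 ∧ w = 0)
    (hs₁ : ∃ x y z w : K', ¬ (x = 0 ∧ y = 0 ∧ z = 0 ∧ w = 0) ∧
      quatNorm (algebraMap K K' (algebraMap k K a₁)) (algebraMap K K' (algebraMap k K c₁))
        x y z w = 0)
    (hs₂ : ∃ x y z w : K', ¬ (x = 0 ∧ y = 0 ∧ z = 0 ∧ w = 0) ∧
      quatNorm (algebraMap K K' (algebraMap k K a₂)) (algebraMap K K' (algebraMap k K c₂))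
        x y z w = 0) :
    ∃ x y z₁ w₁ z₂ w₂ : k, ¬ (x = 0 ∧ y = 0 ∧ z₁ = 0 ∧ w₁ = 0 ∧ z₂ = 0 ∧ w₂ = 0) ∧
      quatNorm a₁ c₁ x y z₁ w₁ = quatNorm a₂ c₂ 0 (2 * x + y) z₂ w₂ ∧ ((2 : k) = 0 → y ≠ 0) := by
  obtain ⟨θ, hθ⟩ : ∃ θ : K', θ ∉ (⊥ : Subalgebra K K') := by
    by_contra! h
    have := Subalgebra.bot_eq_top_iff_finrank_eq_one.mp
      (Algebra.eq_top_iff.mpr h)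
    omega
  have hindep : ∀ r s : K, algebraMap K K' r + algebraMap K K' s * θ = 0 → r = 0 ∧ s = 0 := by
    intro r s h
    have hs : s = 0 := by
      by_contra hs
      refine hθ (Algebra.mem_bot.mpr ⟨-r / s, ?_⟩)
      have hs' : algebraMap K K' s ≠ 0 := by simpa using hs
      rw [map_div₀, map_neg]
      field_simp
      linear_combination -h
    subst hs
    simpa using h
  have hspan : ∀ x : K', ∃ r s : K, x = algebraMap K K' r + algebraMap K K' s * θ := by
    have : FiniteDimensional K K' := .of_finrank_pos (by omega)
    let φ : (K × K) →ₗ[K] K' :=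
      (Algebra.linearMap K K').coprod (LinearMap.mulRight K θ ∘ₗ Algebra.linearMap K K')
    have hinj : Function.Injective φ := by
      rw [← LinearMap.ker_eq_bot, LinearMap.ker_eq_bot']
      rintro ⟨r, s⟩ h
      simpa using hindep r s h
    intro x
    obtain ⟨⟨r, s⟩, h⟩ := (LinearMap.injective_iff_surjective_of_finrank_eq_finrank
      (by simp [hKK'])).mp hinj x
    exact ⟨r, s, h.symm⟩
  obtain ⟨m, t, hmt⟩ := hspan (θ ^ 2)
  have hθθ : θ ^ 2 = algebraMap K K' t * θ - algebraMap K K' (-m) := by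
    rw [hmt, map_neg]
    ring
  obtain ⟨p₁, q₁, r₁, s₁, ht₁, hn₁⟩ := exists_trace_norm_eq_of_isotropic hindep hspan hθθ
    (quatNorm_anisotropic_of_odd_finrank hodd h₁) hs₁
  obtain ⟨p₂, q₂, r₂, s₂, ht₂, hn₂⟩ := exists_trace_norm_eq_of_isotropic hindep hspan hθθ
    (quatNorm_anisotropic_of_odd_finrank hodd h₂) hs₂
  have hiso : ∃ v : Fin 6 → k, quadEval (albertCoeff a₁ c₁ a₂ c₂) v = 0 ∧ v ≠ 0 := by
    by_contra! hcon
    have hv := quadEval_anisotropic_of_odd_finrank _ hcon hodd ![p₁ - p₂, q₁, r₁, s₁, r₂, s₂] (by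
      rw [quadEval_albertCoeff]
      simp only [quatNorm, Matrix.cons_val] at hn₁ hn₂ ⊢
      obtain rfl : q₂ = 2 * (p₁ - p₂) + q₁ := by linear_combination ht₂ - ht₁
      linear_combination hn₁ - hn₂)
    simp only [Matrix.cons_eq_zero_iff] at hv
    obtain ⟨hp, rfl, rfl, rfl, -⟩ := hv
    apply hθ
    have hsq : (θ - algebraMap K K' p₁) ^ 2 = 0 := by
      rw [sub_sq, hθθ, ← ht₁, ← hn₁]
      simp only [quatNorm, map_add, map_sub, map_mul, map_pow, map_ofNat, map_zero]
      ring
    exact Algebra.mem_bot.mpr ⟨p₁, (sub_eq_zero.mp (pow_eq_zero_iff two_ne_zero |>.mp hsq)).symm⟩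
  obtain ⟨v, hv, hv0⟩ := hiso
  rw [quadEval_albertCoeff, sub_eq_zero] at hv
  simp only [Algebra.algebraMap_self, RingHom.id_apply] at hv
  have hne : ¬ (v 0 = 0 ∧ v 1 = 0 ∧ v 2 = 0 ∧ v 3 = 0 ∧ v 4 = 0 ∧ v 5 = 0) := by
    rintro ⟨e0, e1, e2, e3, e4, e5⟩
    apply hv0
    ext n
    fin_cases n <;> assumption
  by_cases hy : (2 : k) = 0 ∧ v 1 = 0
  · obtain ⟨h2, hy⟩ := hy
    rw [hy] at hv hne
    rw [h2, zero_mul, zero_add] at hv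
    obtain ⟨x, z₁, w₁, z₂, w₂, h⟩ := exists_isotropic_of_two_eq_zero h2
      (fun hc => by simpa using h₁ 0 0 1 0 (by simp [quatNorm, hc]))
      (fun hc => by simpa using h₂ 0 0 1 0 (by simp [quatNorm, hc])) (by tauto) hv
    exact ⟨x, 1, z₁, w₁, z₂, w₂, by simp, by rw [h, h2, zero_mul, zero_add], fun _ => one_ne_zero⟩
  · exact ⟨v 0, v 1, v 2, v 3, v 4, v 5, hne, hv, by tauto⟩

/-- A quaternion algebra splits over a field containing a root of the characteristic polynomial
of a noncentral element. -/
theorem nonempty_algEquiv_matrix_of_root {D : Type*} [Ring D] [Algebra k D] {a c : k}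
    (e : ℍ[k, a, 1, c] ≃ₐ[k] D)
    (hk : ∀ x y z w : k, quatNorm a c x y z w = 0 → x = 0 ∧ y = 0 ∧ z = 0 ∧ w = 0)
    {x y z w : k} {θ : K} (hθ : ¬ ∃ r, algebraMap k K r = θ)
    (h : θ ^ 2 - algebraMap k K (2 * x + y) * θ + algebraMap k K (quatNorm a c x y z w) = 0) :
    Nonempty (K ⊗[k] D ≃ₐ[K] Matrix (Fin 2) (Fin 2) K) := by
  have hc : c ≠ 0 := fun hc => by simpa using hk 0 0 1 0 (by simp [quatNorm, hc])
  have ha : 1 + 4 * a ≠ 0 := fun ha => by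
    simpa using hk 1 (-2) 0 0 (by unfold quatNorm; linear_combination -ha)
  have ha' : 1 + 4 * algebraMap k K a ≠ 0 := by
    simpa [map_ofNat] using (map_ne_zero (algebraMap k K)).mpr ha
  obtain ⟨s, t, hst⟩ := exists_norm_eq_of_quatNorm_eq_zero (a := algebraMap k K a)
    (c := algebraMap k K c) (x := algebraMap k K x - θ) (y := algebraMap k K y)
    (z := algebraMap k K z) (w := algebraMap k K w) ha'
    (fun h0 => hθ ⟨x, sub_eq_zero.mp h0.1⟩) (by
      rw [← h]
      simp only [quatNorm, map_add, map_sub, map_mul, map_pow, map_ofNat]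
      ring)
  obtain ⟨f⟩ := nonempty_algEquiv_matrix_of_norm_eq ha'
    ((map_ne_zero (algebraMap k K)).mpr hc) hst
  exact ⟨(baseChangeEquivQuaternion e).trans f⟩

end CommonSlot

theorem stmt5 (k D₁ D₂ : Type) [Field k]
    [DivisionRing D₁] [DivisionRing D₂] [Algebra k D₁] [Algebra k D₂]
    [Algebra.IsCentral k D₁] [Algebra.IsCentral k D₂]
    (h1 : Module.finrank k D₁ = 4) (h2 : Module.finrank k D₂ = 4)
    (K K' : Type) [Field K] [Field K'] [Algebra k K] [Algebra k K']
    [Algebra K K'] [IsScalarTower k K K']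
    [FiniteDimensional k K'] [Algebra.IsSeparable k K']
    (hodd : Odd (Module.finrank k K)) (hKK' : Module.finrank K K' = 2)
    (hs1 : Nonempty ((K' ⊗[k] D₁) ≃ₐ[K'] Matrix (Fin 2) (Fin 2) K'))
    (hs2 : Nonempty ((K' ⊗[k] D₂) ≃ₐ[K'] Matrix (Fin 2) (Fin 2) K')) :
    ∃ (F : Type) (_ : Field F) (_ : Algebra k F),
      Algebra.IsSeparable k F ∧ Module.finrank k F = 2 ∧
      Nonempty ((F ⊗[k] D₁) ≃ₐ[F] Matrix (Fin 2) (Fin 2) F) ∧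
      Nonempty ((F ⊗[k] D₂) ≃ₐ[F] Matrix (Fin 2) (Fin 2) F) := by
  have : FiniteDimensional k K := FiniteDimensional.left k K K'
  have : Algebra.IsSeparable k K := Algebra.isSeparable_tower_bot_of_isSeparable k K K'
  obtain ⟨a₁, c₁, ⟨e₁⟩⟩ := exists_algEquiv_quaternionAlgebra h1
  obtain ⟨a₂, c₂, ⟨e₂⟩⟩ := exists_algEquiv_quaternionAlgebra h2
  obtain ⟨f₁⟩ := hs1
  obtain ⟨f₂⟩ := hs2
  have hk₁ (x y z w : k) := quatNorm_anisotropic e₁ (x := x) (y := y) (z := z) (w := w)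
  have hk₂ (x y z w : k) := quatNorm_anisotropic e₂ (x := x) (y := y) (z := z) (w := w)
  have hs₁ := exists_quatNorm_eq_zero_of_algEquiv_matrix
    ((baseChangeEquivQuaternion e₁).symm.trans f₁)
  have hs₂ := exists_quatNorm_eq_zero_of_algEquiv_matrix
    ((baseChangeEquivQuaternion e₂).symm.trans f₂)
  simp only [IsScalarTower.algebraMap_apply k K K'] at hs₁ hs₂
  obtain ⟨x, y, z₁, w₁, z₂, w₂, hne, hnorm, hchar⟩ :=
    exists_common_trace_norm hodd hKK' hk₁ hk₂ hs₁ hs₂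
  obtain ⟨p, hp⟩ : ∃ p : k[X], p = X ^ 2 + C (-(2 * x + y)) * X + C (quatNorm a₁ c₁ x y z₁ w₁) :=
    ⟨_, rfl⟩
  have hdeg : p.natDegree = 2 := by rw [hp]; compute_degree!
  have hmonic : p.Monic := by rw [hp]; monicity!
  have hirr : Irreducible p := by
    rw [hmonic.irreducible_iff_roots_eq_zero_of_degree_le_three (by omega) (by omega)]
    refine Multiset.eq_zero_of_forall_notMem fun r hr => hne ?_
    have hr' := (mem_roots'.mp hr).2
    simp only [hp, IsRoot.def, eval_add, eval_mul, eval_pow, eval_X, eval_C] at hr'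
    have hr₁ := hk₁ (x - r) y z₁ w₁ (by
      unfold quatNorm at *
      linear_combination hr')
    have hr₂ := hk₂ (-r) (2 * x + y) z₂ w₂ (by
      rw [hnorm] at hr'
      unfold quatNorm at *
      linear_combination hr')
    refine ⟨?_, hr₁.2.1, hr₁.2.2.1, hr₁.2.2.2, hr₂.2.2.1, hr₂.2.2.2⟩
    linear_combination hr₁.1 - hr₂.1
  obtain ⟨θ, hθ⟩ := IsAlgClosed.exists_aeval_eq_zero (AlgebraicClosure k) p
    (by rw [degree_eq_natDegree hmonic.ne_zero, hdeg]; norm_num)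
  have hmin : minpoly k θ = p := (minpoly.eq_of_irreducible_of_monic hirr hθ hmonic).symm
  have hint : IsIntegral k θ := ⟨p, hmonic, hθ⟩
  have hfin : Module.finrank k (IntermediateField.adjoin k {θ}) = 2 := by
    rw [IntermediateField.adjoin.finrank hint, hmin, hdeg]
  have hgen : ¬ ∃ r, algebraMap k (IntermediateField.adjoin k {θ}) r =
      IntermediateField.AdjoinSimple.gen k θ := by
    rintro ⟨r, hr⟩
    have h := congrArg (algebraMap _ (AlgebraicClosure k)) hr
    rw [← IsScalarTower.algebraMap_apply, IntermediateField.AdjoinSimple.algebraMap_gen] at h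
    exact (minpoly.two_le_natDegree_iff hint).mp (by rw [hmin, hdeg]) ⟨r, h⟩
  have hroot : IntermediateField.AdjoinSimple.gen k θ ^ 2 -
      algebraMap k _ (2 * x + y) * IntermediateField.AdjoinSimple.gen k θ +
      algebraMap k _ (quatNorm a₁ c₁ x y z₁ w₁) = 0 := by
    have h : aeval (IntermediateField.AdjoinSimple.gen k θ) p = 0 := by
      rw [← hmin]
      exact IntermediateField.aeval_gen_minpoly k θ
    rw [← h, hp]
    simp only [map_add, map_mul, map_pow, aeval_X, aeval_C, map_neg]
    ring
  refine ⟨IntermediateField.adjoin k {θ}, inferInstance, inferInstance, ?_, hfin,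
    nonempty_algEquiv_matrix_of_root e₁ hk₁ hgen hroot,
    nonempty_algEquiv_matrix_of_root (x := 0) (y := 2 * x + y) e₂ hk₂ hgen
      (by rw [mul_zero, zero_add, ← hnorm]; exact hroot)⟩
  rw [IntermediateField.isSeparable_adjoin_simple_iff_isSeparable, IsSeparable, hmin,
    separable_iff_derivative_ne_zero hirr]
  intro hder
  have hc1 := congrArg (coeff · 1) hder
  have hc0 := congrArg (coeff · 0) hder
  simp [hp, coeff_X, coeff_C] at hc0 hc1
  have h20 : (2 : k) = 0 := by linear_combination hc1
  exact hchar h20 (by linear_combination -hc0 - x * h20)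
end

section
/- Let k ⊆ K ⊆ L be a tower of finite separable field extensions, let β ∈ Kˣ, and let F/k be a finite field extension of degree n. If the image β ⊗ 1 of β in (K ⊗_k F)ˣ is a norm from (L ⊗_k F)ˣ, then β^n ∈ N_{L/K}(Lˣ). -/
open TensorProduct

/-- `β ∈ Kˣ` becomes a norm from `(L ⊗[k] F)ˣ` to `(K ⊗[k] F)ˣ`, where `L ⊗[k] F` is a
`(K ⊗[k] F)`-algebra via the map induced by the inclusion `K ⊆ L`. -/
def IsNormFrom (k K L F : Type) [Field k] [Field K] [Field L] [Field F]
    [Algebra k K] [Algebra k L] [Algebra K L] [IsScalarTower k K L] [Algebra k F]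
    (β : K) : Prop :=
  letI : Algebra (K ⊗[k] F) (L ⊗[k] F) :=
    ((Algebra.TensorProduct.map (IsScalarTower.toAlgHom k K L) (AlgHom.id k F)).toRingHom).toAlgebra
  ∃ x : (L ⊗[k] F)ˣ,
    Algebra.norm (K ⊗[k] F) (x : L ⊗[k] F) = (β : K) ⊗ₜ[k] (1 : F)

attribute [local instance] Algebra.TensorProduct.rightAlgebra in
/-- If `L` is free over `K`, then `L ⊗[k] F` is free over `K ⊗[k] F`, where the algebra
structure is induced by `K → L`. -/
theorem Module.Free.tensorProduct_of_tower (k K L F : Type*) [CommRing k] [CommRing K] [CommRing L]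
    [CommRing F] [Algebra k K] [Algebra k L] [Algebra K L] [IsScalarTower k K L] [Algebra k F]
    [Module.Free K L] [Algebra (K ⊗[k] F) (L ⊗[k] F)]
    (h : algebraMap (K ⊗[k] F) (L ⊗[k] F) =
      (Algebra.TensorProduct.map (IsScalarTower.toAlgHom k K L) (AlgHom.id k F)).toRingHom) :
    Module.Free (K ⊗[k] F) (L ⊗[k] F) := by
  have : IsScalarTower K (K ⊗[k] F) (L ⊗[k] F) := .of_algebraMap_eq fun x ↦ by
    simp [h, Algebra.TensorProduct.algebraMap_apply]
  have : IsScalarTower F (K ⊗[k] F) (L ⊗[k] F) := .of_algebraMap_eq fun x ↦ by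
    simp [h, Algebra.TensorProduct.right_algebraMap_apply]
  have : IsScalarTower k (K ⊗[k] F) (L ⊗[k] F) := .to₁₃₄ _ K _ _
  have : Algebra.IsPushout K L (K ⊗[k] F) (L ⊗[k] F) :=
    (Algebra.IsPushout.comp_iff k K F (K ⊗[k] F)).mp inferInstance
  exact .of_equiv (Algebra.IsPushout.symm this).out.equiv

theorem stmt8 (k K L : Type) [Field k] [Field K] [Field L]
    [Algebra k K] [Algebra k L] [Algebra K L] [IsScalarTower k K L]
    [FiniteDimensional k L] [Algebra.IsSeparable k L]
    (β : Kˣ)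
    (F : Type) [Field F] [Algebra k F] [FiniteDimensional k F]
    (n : ℕ) (hn : Module.finrank k F = n)
    (h : IsNormFrom k K L F (β : K)) :
    ∃ x : Lˣ, Algebra.norm K (x : L) = (β : K) ^ n := by
  let : Algebra (K ⊗[k] F) (L ⊗[k] F) :=
    ((Algebra.TensorProduct.map (IsScalarTower.toAlgHom k K L) (AlgHom.id k F)).toRingHom).toAlgebra
  obtain ⟨x, hx⟩ := h
  have : Module.Free (K ⊗[k] F) (L ⊗[k] F) := .tensorProduct_of_tower k K L F rfl
  have : IsScalarTower K (K ⊗[k] F) (L ⊗[k] F) := .of_algebraMap_eq fun x ↦ by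
    simp [RingHom.algebraMap_toAlgebra, Algebra.TensorProduct.algebraMap_apply]
  refine ⟨Units.map (Algebra.norm L) x, ?_⟩
  calc Algebra.norm K (Algebra.norm L (x : L ⊗[k] F))
      = Algebra.norm K (Algebra.norm (K ⊗[k] F) (x : L ⊗[k] F)) := by
        rw [Algebra.norm_norm, Algebra.norm_norm]
    _ = Algebra.norm K (algebraMap K (K ⊗[k] F) β) := congrArg _ hx
    _ = (β : K) ^ n := by
        rw [Algebra.norm_algebraMap, Module.finrank_baseChange, hn]
end

section
/- Let L/k be a finite Galois field extension with cyclic Galois group and let β ∈ kˣ. Then there exists a finite separable field extension F/k such that (i) β = N_{(L⊗_kF)/F}(x) for some unit x of L ⊗_k F, and (ii) for every finite separable field extension F'/k with β = N_{(L⊗_kF')/F'}(x') for some unit x' of L ⊗_k F', the degree [F:k] divides [F':k]. -/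
open TensorProduct

/-- `β ∈ k` is a norm from `(L ⊗[k] F)ˣ` to `Fˣ`, where `L ⊗[k] F` is regarded as an
`F`-algebra via the right tensor factor. -/
def IsBaseNorm (k L F : Type) [Field k] [Field L] [Field F]
    [Algebra k L] [Algebra k F] (β : k) : Prop :=
  letI : Algebra F (L ⊗[k] F) :=
    (Algebra.TensorProduct.includeRight (R := k) (A := L) (B := F)).toRingHom.toAlgebra
  ∃ x : (L ⊗[k] F)ˣ, Algebra.norm F (x : L ⊗[k] F) = algebraMap k F β

section CyclicRelations

variable {k L F B : Type*} [Field k] [Field L] [Algebra k L] [Field F]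
  [Ring B] [Algebra k B] [Algebra F B]

/-- The elements `ι l` (`l : L`) and `u` of the `k`-algebra `B` satisfy the defining relations of
the cyclic algebra `(L/k, σ, β)` of degree `n`. -/
structure CyclicRelations (σ : L ≃ₐ[k] L) (n : ℕ) (β : k) (ι : L →ₐ[k] B) (u : B) : Prop where
  gen_mul : ∀ l, u * ι l = ι (σ l) * u
  pow_eq : u ^ n = algebraMap k B β

theorem orderOf_eq_dim_of_generator [FiniteDimensional k L] [IsGalois k L] {σ : L ≃ₐ[k] L}
    (hσ : ∀ g, g ∈ Subgroup.zpowers σ) (pb : PowerBasis k L) : orderOf σ = pb.dim := by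
  rw [orderOf_eq_card_of_forall_mem_zpowers hσ, IsGalois.card_aut_eq_finrank, pb.finrank]

theorem PowerBasis.pow_apply_gen_injective {σ : L ≃ₐ[k] L} (pb : PowerBasis k L)
    (hσ : orderOf σ = pb.dim) :
    Function.Injective fun i : Fin pb.dim ↦ (σ ^ (i : ℕ)) pb.gen := by
  intro i j hij
  have h : σ ^ (i : ℕ) = σ ^ (j : ℕ) := by
    have := pb.algHom_ext (f := ((σ ^ (i : ℕ) : L ≃ₐ[k] L) : L →ₐ[k] L))
      (g := ((σ ^ (j : ℕ) : L ≃ₐ[k] L) : L →ₐ[k] L)) hij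
    exact AlgEquiv.ext fun x ↦ DFunLike.congr_fun this x
  exact Fin.ext (pow_injOn_Iio_orderOf (by simp [hσ]) (by simp [hσ]) h)

theorem PowerBasis.isUnit_det_vandermonde {σ : L ≃ₐ[k] L} (pb : PowerBasis k L)
    (hσ : orderOf σ = pb.dim) :
    IsUnit (Matrix.vandermonde fun i : Fin pb.dim ↦ (σ ^ (i : ℕ)) pb.gen).det :=
  (Matrix.det_vandermonde_ne_zero_iff.2 (pb.pow_apply_gen_injective hσ)).isUnit

theorem PowerBasis.eq_zero_of_forall_sum_eq_zero {σ : L ≃ₐ[k] L} (pb : PowerBasis k L)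
    (hσ : orderOf σ = pb.dim) (ι : L →ₐ[k] B) (f : Fin pb.dim → B)
    (hf : ∀ i : Fin pb.dim, ∑ j : Fin pb.dim, ι ((σ ^ (i : ℕ)) pb.gen ^ (j : ℕ)) * f j = 0)
    (j : Fin pb.dim) : f j = 0 := by
  set P := Matrix.vandermonde fun i : Fin pb.dim ↦ (σ ^ (i : ℕ)) pb.gen
  have hQ : P⁻¹ * P = 1 := Matrix.nonsing_inv_mul _ (pb.isUnit_det_vandermonde hσ)
  calc f j = ∑ j', ι ((P⁻¹ * P) j j') * f j' := by
        simp [hQ, Matrix.one_apply, apply_ite ι]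
    _ = ∑ i, ι (P⁻¹ j i) * ∑ j' : Fin pb.dim, ι ((σ ^ (i : ℕ)) pb.gen ^ (j' : ℕ)) * f j' := by
        simp_rw [Matrix.mul_apply, map_sum, Finset.sum_mul, Finset.mul_sum]
        rw [Finset.sum_comm]
        simp [P, Matrix.vandermonde_apply, mul_assoc]
    _ = 0 := by simp only [hf, mul_zero, Finset.sum_const_zero]

namespace CyclicRelations

variable {σ : L ≃ₐ[k] L} {n : ℕ} {β : k} {ι : L →ₐ[k] B} {u : B}

theorem pow_mul_comm (h : CyclicRelations σ n β ι u) (i : ℕ) (l : L) :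
    u ^ i * ι l = ι ((σ ^ i) l) * u ^ i := by
  induction i generalizing l with
  | zero => simp
  | succ i ih => rw [pow_succ, mul_assoc, h.gen_mul, ← mul_assoc, ih, mul_assoc, pow_succ]; rfl

theorem isUnit (h : CyclicRelations σ n β ι u) (hn : n ≠ 0) (hβ : β ≠ 0) : IsUnit u := by
  rw [← isUnit_pow_iff hn, h.pow_eq]
  exact hβ.isUnit.map _

theorem map {B' : Type*} [Ring B'] [Algebra k B'] (h : CyclicRelations σ n β ι u)
    (f : B →ₐ[k] B') : CyclicRelations σ n β (f.comp ι) (f u) where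
  gen_mul l := by simpa using congrArg f (h.gen_mul l)
  pow_eq := by simpa using congrArg f h.pow_eq

variable {pb : PowerBasis k L}

theorem eq_zero_of_sum_mul_pow_eq_zero (h : CyclicRelations σ pb.dim β ι u)
    (hσ : orderOf σ = pb.dim) (hβ : β ≠ 0) (r : Fin pb.dim → B)
    (hr : ∀ i l, Commute (r i) (ι l)) (hsum : ∑ i, r i * u ^ (i : ℕ) = 0) (i : Fin pb.dim) :
    r i = 0 := by
  set P := Matrix.vandermonde fun i : Fin pb.dim ↦ (σ ^ (i : ℕ)) pb.gen
  have hQ : P * P⁻¹ = 1 := Matrix.mul_nonsing_inv _ (pb.isUnit_det_vandermonde hσ)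
  have hu : IsUnit (u ^ (i : ℕ)) := (h.isUnit (Fin.pos i).ne' hβ).pow _
  rw [← hu.mul_left_eq_zero]
  calc r i * u ^ (i : ℕ) = ∑ i', r i' * ι ((P * P⁻¹) i' i) * u ^ (i' : ℕ) := by
        simp [hQ, Matrix.one_apply, apply_ite ι]
    _ = ∑ j, ι (P⁻¹ j i) * ((∑ i', r i' * u ^ (i' : ℕ)) * ι (pb.gen ^ (j : ℕ))) := by
        simp_rw [Matrix.mul_apply, map_sum, Finset.sum_mul, Finset.mul_sum, Finset.sum_mul]
        rw [Finset.sum_comm]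
        refine Finset.sum_congr rfl fun j _ ↦ Finset.sum_congr rfl fun i' _ ↦ ?_
        rw [mul_assoc (r i') (u ^ _), h.pow_mul_comm, ← mul_assoc (r i'), ← mul_assoc,
          ← mul_assoc, ← (hr i' _).eq, mul_assoc (r i') (ι _) (ι _), ← map_mul, mul_comm (P⁻¹ j i),
          map_pow]
        simp [P, Matrix.vandermonde_apply]
    _ = 0 := by simp [hsum]

theorem eq_zero_of_sum_smul_eq_zero [Nontrivial B] (h : CyclicRelations σ pb.dim β ι u)
    (hσ : orderOf σ = pb.dim) (hβ : β ≠ 0) (f : Fin pb.dim → F)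
    (hf : ∑ j, f j • ι (pb.gen ^ (j : ℕ)) = 0) (j : Fin pb.dim) : f j = 0 := by
  refine (algebraMap F B).injective ?_
  rw [map_zero]
  refine pb.eq_zero_of_forall_sum_eq_zero hσ ι (fun j ↦ algebraMap F B (f j)) (fun i ↦ ?_) j
  have hu : IsUnit (u ^ (i : ℕ)) := (h.isUnit (Fin.pos i).ne' hβ).pow _
  rw [← hu.mul_left_eq_zero]
  simp_rw [Finset.sum_mul, ← Algebra.commutes, mul_assoc, ← map_pow, ← h.pow_mul_comm]
  rw [← mul_zero (u ^ (i : ℕ)), ← hf, Finset.mul_sum]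
  refine Finset.sum_congr rfl fun j _ ↦ ?_
  rw [mul_smul_comm, Algebra.smul_def]

theorem commute_sum_smul (f : Fin pb.dim → F) (l : L) :
    Commute (∑ j, f j • ι (pb.gen ^ (j : ℕ))) (ι l) := by
  refine Commute.sum_left _ _ _ fun j _ ↦ Commute.smul_left ?_ _
  exact (Commute.all (pb.gen ^ (j : ℕ)) l).map ι

theorem linearIndependent [Nontrivial B] (h : CyclicRelations σ pb.dim β ι u)
    (hσ : orderOf σ = pb.dim) (hβ : β ≠ 0) :
    LinearIndependent F
      fun p : Fin pb.dim × Fin pb.dim ↦ ι (pb.gen ^ (p.2 : ℕ)) * u ^ (p.1 : ℕ) := by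
  rw [Fintype.linearIndependent_iff]
  rintro f hf ⟨i, j⟩
  rw [Fintype.sum_prod_type] at hf
  refine h.eq_zero_of_sum_smul_eq_zero hσ hβ (fun j ↦ f (i, j)) ?_ j
  refine h.eq_zero_of_sum_mul_pow_eq_zero hσ hβ
    (fun i ↦ ∑ j, f (i, j) • ι (pb.gen ^ (j : ℕ))) (fun i l ↦ commute_sum_smul _ l) ?_ i
  simpa [Finset.sum_mul] using hf

theorem span_eq_top [Algebra k F] [IsScalarTower k F B] (h : CyclicRelations σ pb.dim β ι u)
    (hgen : Algebra.adjoin F (insert u (Set.range ι)) = ⊤) :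
    ⊤ ≤ Submodule.span F (Set.range
      fun p : Fin pb.dim × Fin pb.dim ↦ ι (pb.gen ^ (p.2 : ℕ)) * u ^ (p.1 : ℕ)) := by
  set W := Submodule.span F (Set.range
      fun p : Fin pb.dim × Fin pb.dim ↦ ι (pb.gen ^ (p.2 : ℕ)) * u ^ (p.1 : ℕ))
  have hpos : 0 < pb.dim := pb.dim_pos
  have hW : ∀ (i : ℕ) (l : L), ι l * u ^ i ∈ W := by
    intro i
    induction i using Nat.strong_induction_on with
    | _ i ih =>
      intro l
      by_cases hi : i < pb.dim
      · rw [← pb.basis.sum_repr l, map_sum, Finset.sum_mul]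
        refine W.sum_mem fun j _ ↦ ?_
        rw [map_smul, smul_mul_assoc, ← algebraMap_smul F]
        refine W.smul_mem _ (Submodule.subset_span ⟨(⟨i, hi⟩, j), by simp⟩)
      · obtain ⟨m, rfl⟩ := Nat.exists_eq_add_of_le (not_lt.1 hi)
        rw [pow_add, h.pow_eq, ← Algebra.smul_def, mul_smul_comm, ← algebraMap_smul F]
        exact W.smul_mem _ (ih m (by omega) l)
  have hmul : ∀ a x : B, x ∈ W → a * x ∈ W := by
    intro a
    have ha : a ∈ Algebra.adjoin F (insert u (Set.range ι)) := hgen ▸ Algebra.mem_top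
    induction ha using Algebra.adjoin_induction with
    | mem a ha =>
      intro x hx
      induction hx using Submodule.span_induction with
      | mem x hx =>
        obtain ⟨p, rfl⟩ := hx
        rcases ha with rfl | ⟨l, rfl⟩
        · simp only [← mul_assoc, h.gen_mul]
          rw [mul_assoc, ← pow_succ']
          exact hW _ _
        · simp only [← mul_assoc, ← map_mul]
          exact hW _ _
      | zero => simp
      | add x y _ _ hx hy => rw [mul_add]; exact W.add_mem hx hy
      | smul c x _ hx => rw [mul_smul_comm]; exact W.smul_mem _ hx
    | algebraMap r => intro x hx; rw [← Algebra.smul_def]; exact W.smul_mem _ hx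
    | add a b _ _ ha hb => intro x hx; rw [add_mul]; exact W.add_mem (ha x hx) (hb x hx)
    | mul a b _ _ ha hb => intro x hx; rw [mul_assoc]; exact ha _ (hb x hx)
  intro a _
  simpa using hmul a 1 (by simpa using hW 0 1)

/-- The basis `ι (gen ^ j) * u ^ i` of an algebra generated by `ι` and `u`. -/
noncomputable def basis [Algebra k F] [IsScalarTower k F B] [Nontrivial B]
    (h : CyclicRelations σ pb.dim β ι u) (hσ : orderOf σ = pb.dim) (hβ : β ≠ 0)
    (hgen : Algebra.adjoin F (insert u (Set.range ι)) = ⊤) :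
    Module.Basis (Fin pb.dim × Fin pb.dim) F B :=
  .mk (h.linearIndependent hσ hβ) (h.span_eq_top hgen)

theorem finrank_eq [Algebra k F] [IsScalarTower k F B] [Nontrivial B]
    (h : CyclicRelations σ pb.dim β ι u) (hσ : orderOf σ = pb.dim) (hβ : β ≠ 0)
    (hgen : Algebra.adjoin F (insert u (Set.range ι)) = ⊤) :
    Module.finrank F B = pb.dim * pb.dim := by
  simp [Module.finrank_eq_card_basis (h.basis hσ hβ hgen)]

theorem isCentral [Algebra k F] [IsScalarTower k F B] [Nontrivial B]
    (h : CyclicRelations σ pb.dim β ι u) (hσ : orderOf σ = pb.dim) (hβ : β ≠ 0)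
    (hgen : Algebra.adjoin F (insert u (Set.range ι)) = ⊤) : Algebra.IsCentral F B where
  out z hz := by
    rw [Subalgebra.mem_center_iff] at hz
    set f := (h.basis hσ hβ hgen).repr z
    let r : Fin pb.dim → B := fun i ↦ ∑ j, f (i, j) • ι (pb.gen ^ (j : ℕ))
    have hzr : z = ∑ i, r i * u ^ (i : ℕ) := by
      conv_lhs => rw [← (h.basis hσ hβ hgen).sum_repr z, Fintype.sum_prod_type]
      simp [r, f, basis, Finset.sum_mul]
    have hr : ∀ i l, Commute (r i) (ι l) := fun i l ↦ commute_sum_smul _ l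
    let o : Fin pb.dim := ⟨0, pb.dim_pos⟩
    have hr0 : ∀ i, i ≠ o → r i = 0 := by
      intro i hi
      have hne : (σ ^ (i : ℕ)) pb.gen - pb.gen ≠ 0 := by
        rw [sub_ne_zero]
        intro he
        exact hi (pb.pow_apply_gen_injective hσ (by simpa [o] using he))
      have hunit : IsUnit (ι ((σ ^ (i : ℕ)) pb.gen - pb.gen)) := hne.isUnit.map ι
      rw [← hunit.mul_left_eq_zero]
      refine h.eq_zero_of_sum_mul_pow_eq_zero hσ hβ
        (fun i ↦ r i * ι ((σ ^ (i : ℕ)) pb.gen - pb.gen))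
        (fun i l ↦ (hr i l).mul_left ((Commute.all _ l).map ι)) ?_ i
      have hc := hz (ι pb.gen)
      rw [hzr, Finset.mul_sum, Finset.sum_mul, eq_comm, ← sub_eq_zero,
        ← Finset.sum_sub_distrib] at hc
      rw [← hc]
      refine Finset.sum_congr rfl fun i _ ↦ ?_
      rw [map_sub, mul_sub, sub_mul, mul_assoc (r i) (u ^ _), h.pow_mul_comm, ← mul_assoc,
        (hr i pb.gen).eq, mul_assoc (ι pb.gen)]
    have hz0 : z = r o := by
      rw [hzr, Finset.sum_eq_single o (fun i _ hi ↦ by simp [hr0 i hi]) (by simp)]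
      simp [o]
    have key := pb.eq_zero_of_forall_sum_eq_zero hσ ι
      (fun j ↦ algebraMap F B (f (o, j)) - if j = o then z else 0) (fun i ↦ ?_) o
    · simp only [if_true, sub_eq_zero] at key
      exact ⟨_, key⟩
    · have hu : IsUnit (u ^ (i : ℕ)) := (h.isUnit (Fin.pos i).ne' hβ).pow _
      rw [← hu.mul_left_eq_zero]
      have hc := hz (u ^ (i : ℕ))
      nth_rewrite 1 [hz0] at hc
      simp only [mul_sub, Finset.sum_sub_distrib, sub_mul, mul_ite, mul_zero,
        Finset.sum_ite_eq', Finset.mem_univ, if_true]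
      simp only [o, pow_zero, map_one, one_mul]
      rw [sub_eq_zero, ← hc]
      simp only [r, Finset.mul_sum, Finset.sum_mul, mul_smul_comm, h.pow_mul_comm, o]
      refine Finset.sum_congr rfl fun j _ ↦ ?_
      rw [map_pow (σ ^ (i : ℕ)), ← Algebra.commutes, Algebra.smul_def, mul_assoc]

theorem isSimpleRing [Algebra k F] [IsScalarTower k F B] [Nontrivial B]
    (h : CyclicRelations σ pb.dim β ι u) (hσ : orderOf σ = pb.dim) (hβ : β ≠ 0)
    (hgen : Algebra.adjoin F (insert u (Set.range ι)) = ⊤) : IsSimpleRing B := by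
  have hbot : ∀ I : TwoSidedIdeal B, I = ⊥ ∨ I = ⊤ := fun I ↦ by
    refine or_iff_not_imp_right.2 fun hI ↦ ?_
    let π : B →ₐ[F] I.ringCon.Quotient := { I.ringCon.mk' with commutes' := fun _ ↦ rfl }
    let π' : B →ₐ[k] I.ringCon.Quotient := { I.ringCon.mk' with commutes' := fun _ ↦ rfl }
    have hπ : ∀ x, π x = 0 ↔ x ∈ I := fun x ↦ by
      rw [← map_zero π, TwoSidedIdeal.mem_iff]
      exact I.ringCon.eq
    have : Nontrivial I.ringCon.Quotient := by
      refine ⟨⟨π 1, 0, fun h1 ↦ hI ?_⟩⟩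
      exact (TwoSidedIdeal.one_mem_iff I).1 ((hπ 1).1 h1)
    have hli := (h.map π').linearIndependent (F := F) hσ hβ
    have hinj : Function.Injective π := by
      refine (injective_iff_map_eq_zero π).2 fun x hx ↦ ?_
      rw [Fintype.linearIndependent_iff] at hli
      have hx' := hli ((h.basis hσ hβ hgen).repr x) ?_
      · rw [← (h.basis hσ hβ hgen).sum_repr x]
        simp [hx']
      · rw [← (h.basis hσ hβ hgen).sum_repr x] at hx
        have hπ' : ∀ x, π' x = π x := fun _ ↦ rfl
        simpa [basis, hπ'] using hx
    refine (TwoSidedIdeal.ext fun x ↦ ?_)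
    rw [← hπ, map_eq_zero_iff π hinj, TwoSidedIdeal.mem_bot]
  exact ⟨⟨hbot⟩⟩

end CyclicRelations

end CyclicRelations

section CyclicAlgebra

variable {k L : Type*} [Field k] [Field L] [Algebra k L]

/-- The defining relations of the cyclic algebra `(L/k, σ, β)` of degree `n`, on the free algebra
generated by the elements of `L` and one further generator `none`. -/
inductive CyclicAlgebra.Rel (σ : L ≃ₐ[k] L) (n : ℕ) (β : k) :
    FreeAlgebra k (Option L) → FreeAlgebra k (Option L) → Prop
  | add (x y : L) : Rel σ n β (FreeAlgebra.ι k (some (x + y)))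
      (FreeAlgebra.ι k (some x) + FreeAlgebra.ι k (some y))
  | mul (x y : L) : Rel σ n β (FreeAlgebra.ι k (some (x * y)))
      (FreeAlgebra.ι k (some x) * FreeAlgebra.ι k (some y))
  | algebraMap (r : k) : Rel σ n β (FreeAlgebra.ι k (some (algebraMap k L r)))
      (algebraMap k (FreeAlgebra k (Option L)) r)
  | gen_mul (l : L) : Rel σ n β (FreeAlgebra.ι k none * FreeAlgebra.ι k (some l))
      (FreeAlgebra.ι k (some (σ l)) * FreeAlgebra.ι k none)
  | pow_eq : Rel σ n β (FreeAlgebra.ι k none ^ n) (algebraMap k (FreeAlgebra k (Option L)) β)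

/-- The cyclic algebra `(L/k, σ, β)` of degree `n`. -/
abbrev CyclicAlgebra (σ : L ≃ₐ[k] L) (n : ℕ) (β : k) : Type _ :=
  RingQuot (CyclicAlgebra.Rel σ n β)

namespace CyclicAlgebra

variable (σ : L ≃ₐ[k] L) (n : ℕ) (β : k)

/-- The quotient map from the free algebra. -/
noncomputable abbrev mk : FreeAlgebra k (Option L) →ₐ[k] CyclicAlgebra σ n β :=
  RingQuot.mkAlgHom k (Rel σ n β)

/-- The inclusion of `L` into the cyclic algebra. -/
noncomputable def ofField : L →ₐ[k] CyclicAlgebra σ n β :=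
  have hr (r : k) : mk σ n β (FreeAlgebra.ι k (some (algebraMap k L r))) = algebraMap k _ r :=
    (RingQuot.mkAlgHom_rel k (Rel.algebraMap r)).trans (AlgHom.commutes _ r)
  { toFun := fun l ↦ mk σ n β (FreeAlgebra.ι k (some l))
    map_one' := by simpa using hr 1
    map_zero' := by simpa using hr 0
    map_add' := fun x y ↦ (RingQuot.mkAlgHom_rel k (Rel.add x y)).trans (map_add _ _ _)
    map_mul' := fun x y ↦ (RingQuot.mkAlgHom_rel k (Rel.mul x y)).trans (map_mul _ _ _)
    commutes' := hr }

/-- The generator of the cyclic algebra that induces `σ` on `L`. -/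
noncomputable def gen : CyclicAlgebra σ n β :=
  mk σ n β (FreeAlgebra.ι k none)

theorem relations : CyclicRelations σ n β (ofField σ n β) (gen σ n β) where
  gen_mul l := (map_mul _ _ _).symm.trans <|
    (RingQuot.mkAlgHom_rel k (Rel.gen_mul l)).trans (map_mul _ _ _)
  pow_eq := (map_pow _ _ _).symm.trans <|
    (RingQuot.mkAlgHom_rel k Rel.pow_eq).trans (AlgHom.commutes _ β)

theorem adjoin_eq_top :
    Algebra.adjoin k (insert (gen σ n β) (Set.range (ofField σ n β))) = ⊤ := by
  have h : insert (gen σ n β) (Set.range (ofField σ n β)) =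
      mk σ n β '' Set.range (FreeAlgebra.ι k) := by
    ext x
    simp [Option.exists, ofField, gen, eq_comm]
  rw [h, ← AlgHom.map_adjoin, FreeAlgebra.adjoin_range_ι, Algebra.map_top, AlgHom.range_eq_top]
  exact RingQuot.mkAlgHom_surjective k _

variable {σ n β} {B : Type*} [Ring B] [Algebra k B] {ι : L →ₐ[k] B} {u : B}

/-- The universal property of the cyclic algebra. -/
noncomputable def lift (h : CyclicRelations σ n β ι u) : CyclicAlgebra σ n β →ₐ[k] B :=
  RingQuot.liftAlgHom k ⟨FreeAlgebra.lift k fun o ↦ o.elim u ι, by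
    rintro _ _ (⟨x, y⟩ | ⟨x, y⟩ | r | l | _)
    · simp
    · simp
    · simp
    · simpa using h.gen_mul l
    · simpa using h.pow_eq⟩

end CyclicAlgebra

end CyclicAlgebra

section Twist

variable {k L K : Type*} [Field k] [Field L] [Algebra k L] [CommRing K] [Algebra k K]

/-- The endomorphism `σ ⊗ 1` of `L ⊗ K`. -/
noncomputable def tensorTwist (K : Type*) [CommRing K] [Algebra k K] (σ : L ≃ₐ[k] L) :
    L ⊗[k] K →ₐ[k] L ⊗[k] K :=
  Algebra.TensorProduct.map (σ : L →ₐ[k] L) (AlgHom.id k K)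

@[simp]
theorem tensorTwist_tmul (σ : L ≃ₐ[k] L) (l : L) (x : K) :
    tensorTwist K σ (l ⊗ₜ x) = σ l ⊗ₜ x := by
  simp [tensorTwist]

theorem tensorTwist_pow_apply (σ : L ≃ₐ[k] L) (i : ℕ) (x : L ⊗[k] K) :
    (tensorTwist K σ)^[i] x = tensorTwist K (σ ^ i) x := by
  induction x with
  | zero => simp [iterate_map_zero]
  | add x y hx hy => simp [iterate_map_add, hx, hy]
  | tmul l x =>
    induction i generalizing l with
    | zero => simp
    | succ i ih => rw [Function.iterate_succ_apply, tensorTwist_tmul, ih]; simp [pow_succ]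

@[simp]
theorem tensorTwist_one_apply (x : L ⊗[k] K) : tensorTwist K (1 : L ≃ₐ[k] L) x = x := by
  simpa using (tensorTwist_pow_apply (1 : L ≃ₐ[k] L) 0 x).symm

/-- Multiplication by `c` after `σ ⊗ 1`, as an endomorphism of `L ⊗ K`. -/
noncomputable def mulTwist (σ : L ≃ₐ[k] L) (c : L ⊗[k] K) : Module.End k (L ⊗[k] K) :=
  Algebra.lmul k _ c * (tensorTwist K σ).toLinearMap

theorem mulTwist_pow_apply (σ : L ≃ₐ[k] L) (c : L ⊗[k] K) (i : ℕ) (x : L ⊗[k] K) :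
    (mulTwist σ c ^ i) x =
      (∏ j ∈ Finset.range i, tensorTwist K (σ ^ j) c) * tensorTwist K (σ ^ i) x := by
  induction i generalizing x with
  | zero => simp
  | succ i ih =>
    rw [pow_succ, Module.End.mul_apply, ih, Finset.prod_range_succ]
    have h : tensorTwist K (σ ^ (i + 1)) x = tensorTwist K (σ ^ i) (tensorTwist K σ x) := by
      simp_rw [← tensorTwist_pow_apply, Function.iterate_succ_apply]
    rw [h, mul_assoc, ← map_mul]
    rfl

theorem cyclicRelations_mulTwist {σ : L ≃ₐ[k] L} {n : ℕ} (hσ : σ ^ n = 1) {β : k} {c : L ⊗[k] K}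
    (hc : ∏ j ∈ Finset.range n, tensorTwist K (σ ^ j) c = algebraMap k _ β) :
    CyclicRelations σ n β ((Algebra.lmul k _).comp Algebra.TensorProduct.includeLeft)
      (mulTwist σ c) where
  gen_mul l := LinearMap.ext fun x ↦ by simp [mulTwist, mul_left_comm]
  pow_eq := LinearMap.ext fun x ↦ by
    rw [mulTwist_pow_apply, hc, hσ, tensorTwist_one_apply, ← Algebra.smul_def]
    rfl

theorem CyclicAlgebra.nontrivial {σ : L ≃ₐ[k] L} {n : ℕ} (hσ : σ ^ n = 1) (hn : n ≠ 0) (β : k) :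
    Nontrivial (CyclicAlgebra σ n β) := by
  let K := AdjoinRoot (Polynomial.X ^ n - Polynomial.C β)
  have : Nontrivial K := by
    refine AdjoinRoot.nontrivial _ ?_
    rw [Polynomial.degree_X_pow_sub_C (Nat.pos_of_ne_zero hn)]
    exact_mod_cast hn
  have hroot : (AdjoinRoot.root (Polynomial.X ^ n - Polynomial.C β)) ^ n = algebraMap k K β := by
    have := AdjoinRoot.eval₂_root (Polynomial.X ^ n - Polynomial.C β)
    rwa [Polynomial.eval₂_sub, Polynomial.eval₂_X_pow, Polynomial.eval₂_C, sub_eq_zero] at this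
  have h := cyclicRelations_mulTwist (K := K) hσ (β := β)
    (c := 1 ⊗ₜ AdjoinRoot.root (Polynomial.X ^ n - Polynomial.C β)) (by
      simp [Algebra.TensorProduct.tmul_pow, hroot, Algebra.algebraMap_eq_smul_one,
        Algebra.TensorProduct.one_def])
  exact (CyclicAlgebra.lift h).toRingHom.domain_nontrivial

/-- If the conjugates of a basis form an invertible matrix, the norm is the product of the
conjugates. -/
theorem Algebra.algebraMap_norm_eq_prod {F R ι : Type*} [CommRing F] [CommRing R] [Algebra F R]
    [Fintype ι] [DecidableEq ι] (b : Module.Basis ι F R) (τ : ι → R →ₐ[F] R)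
    (hdet : IsUnit (Matrix.of fun i j ↦ τ i (b j)).det) (c : R) :
    algebraMap F R (Algebra.norm F c) = ∏ i, τ i c := by
  set P : Matrix ι ι R := Matrix.of fun i j ↦ τ i (b j)
  have h : P * (algebraMap F R).mapMatrix (Algebra.leftMulMatrix b c) =
      Matrix.diagonal (fun i ↦ τ i c) * P := by
    ext i j
    rw [Matrix.diagonal_mul, Matrix.mul_apply]
    calc _ = τ i (∑ l, b.repr (c * b j) l • b l) := by
          simp [P, Algebra.leftMulMatrix_eq_repr_mul, Algebra.smul_def, mul_comm]
      _ = _ := by rw [b.sum_repr, map_mul]; rfl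
  have hd := congrArg Matrix.det h
  rw [Matrix.det_mul, Matrix.det_mul, Matrix.det_diagonal, mul_comm, ← RingHom.map_det] at hd
  rw [Algebra.norm_eq_matrix_det b]
  exact hdet.mul_right_cancel hd

end Twist

section BaseNorm

variable {k L F : Type} [Field k] [Field L] [Field F] [Algebra k L] [Algebra k F]

attribute [local instance] Algebra.TensorProduct.rightAlgebra

/-- The basis of `L ⊗ F` over the right factor `F` given by the powers of a generator of `L`. -/
noncomputable def PowerBasis.tensorBasis (pb : PowerBasis k L) (F : Type) [Field F] [Algebra k F] :
    Module.Basis (Fin pb.dim) F (L ⊗[k] F) :=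
  (Algebra.TensorProduct.basis F pb.basis).map
    { TensorProduct.comm k F L with
      map_smul' := fun a x ↦ by
        induction x with
        | zero => simp
        | add x y hx hy => simp_all
        | tmul f l => simp [Algebra.smul_def,
            Algebra.TensorProduct.right_algebraMap_apply] }

@[simp]
theorem PowerBasis.tensorBasis_apply (pb : PowerBasis k L) (j : Fin pb.dim) :
    pb.tensorBasis F j = (pb.gen ^ (j : ℕ)) ⊗ₜ[k] (1 : F) := by
  simp [PowerBasis.tensorBasis]

theorem includeRight_norm_eq_prod {σ : L ≃ₐ[k] L} (pb : PowerBasis k L)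
    (hσ : orderOf σ = pb.dim) (c : L ⊗[k] F) :
    algebraMap F (L ⊗[k] F) (Algebra.norm F c) =
      ∏ j ∈ Finset.range pb.dim, tensorTwist F (σ ^ j) c := by
  rw [Finset.prod_range]
  let τ : Fin pb.dim → L ⊗[k] F →ₐ[F] L ⊗[k] F := fun i ↦
    { tensorTwist F (σ ^ (i : ℕ)) with
      commutes' := fun r ↦ by
        change tensorTwist F (σ ^ (i : ℕ)) _ = _
        simp [Algebra.TensorProduct.right_algebraMap_apply] }
  refine Algebra.algebraMap_norm_eq_prod (pb.tensorBasis F) τ ?_ c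
  convert (pb.isUnit_det_vandermonde hσ).map
    (Algebra.TensorProduct.includeLeft : L →ₐ[k] L ⊗[k] F)
  rw [AlgHom.map_det]
  congr 1
  ext i j
  simp [τ, Matrix.vandermonde_apply]

theorem isBaseNorm_iff {σ : L ≃ₐ[k] L} (pb : PowerBasis k L)
    (hσ : orderOf σ = pb.dim) {β : k} (hβ : β ≠ 0) :
    IsBaseNorm k L F β ↔
      ∃ c : L ⊗[k] F, ∏ j ∈ Finset.range pb.dim, tensorTwist F (σ ^ j) c = algebraMap k _ β := by
  have key (c : L ⊗[k] F) : Algebra.norm F c = algebraMap k F β ↔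
      ∏ j ∈ Finset.range pb.dim, tensorTwist F (σ ^ j) c = algebraMap k _ β := by
    rw [← includeRight_norm_eq_prod pb hσ c,
      ← (algebraMap F (L ⊗[k] F)).injective.eq_iff]
    rw [← IsScalarTower.algebraMap_apply]
  constructor
  · rintro ⟨x, hx⟩
    exact ⟨x, (key x).1 hx⟩
  · rintro ⟨c, hc⟩
    have hu : IsUnit c := by
      refine isUnit_of_dvd_unit ?_ (hc ▸ hβ.isUnit.map (algebraMap k (L ⊗[k] F)))
      simpa using Finset.dvd_prod_of_mem (fun j ↦ tensorTwist F (σ ^ j) c)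
        (Finset.mem_range.2 pb.dim_pos)
    exact ⟨hu.unit, (key c).2 hc⟩

end BaseNorm

section CyclicVector

open Polynomial in
theorem Module.End.exists_aeval_apply_eq_zero_imp {F S : Type*} [Field F] [AddCommGroup S]
    [Module F S] [FiniteDimensional F S] (θ : Module.End F S) :
    ∃ v : S, ∀ p : F[X], aeval θ p v = 0 → aeval θ p = 0 := by
  obtain ⟨x, hx⟩ := Module.exists_ker_toSpanSingleton_eq_annihilator F[X] (Module.AEval' θ)
  obtain ⟨v, rfl⟩ := (Module.AEval'.of θ).surjective x
  refine ⟨v, fun p hp ↦ LinearMap.ext fun s ↦ ?_⟩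
  have hmem : p ∈ LinearMap.ker (LinearMap.toSpanSingleton F[X] _ (Module.AEval'.of θ v)) := by
    rw [LinearMap.mem_ker, LinearMap.toSpanSingleton_apply, ← Module.AEval.of_aeval_smul]
    simp [hp]
  rw [hx, Module.mem_annihilator] at hmem
  have := hmem (Module.AEval'.of θ s)
  rw [← Module.AEval.of_aeval_smul] at this
  simpa using this

variable {k L F S : Type} [Field k] [Field L] [Algebra k L] [Field F] [Algebra k F]
  [AddCommGroup S] [Module k S] [Module F S] [IsScalarTower k F S]

attribute [local instance] Algebra.TensorProduct.rightAlgebra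

theorem CyclicRelations.exists_prod_eq {σ : L ≃ₐ[k] L} {pb : PowerBasis k L} {β : k}
    {ι : L →ₐ[k] Module.End F S} {u : Module.End F S} (h : CyclicRelations σ pb.dim β ι u)
    (hσ : orderOf σ = pb.dim) (hβ : β ≠ 0) [FiniteDimensional F S]
    (hS : Module.finrank F S = pb.dim) :
    ∃ c : L ⊗[k] F, ∏ j ∈ Finset.range pb.dim, tensorTwist F (σ ^ j) c = algebraMap k _ β := by
  have : Nontrivial S := Module.nontrivial_of_finrank_pos (R := F) (hS ▸ pb.dim_pos)
  obtain ⟨v, hv⟩ := Module.End.exists_aeval_apply_eq_zero_imp (ι pb.gen)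
  let Φ : L ⊗[k] F →ₐ[k] Module.End F S :=
    Algebra.TensorProduct.lift ι (IsScalarTower.toAlgHom k F (Module.End F S))
      fun l f ↦ (Algebra.commutes f (ι l)).symm
  have hΦ (l : L) (f : F) : Φ (l ⊗ₜ f) = f • ι l := by
    rw [Algebra.smul_def, Algebra.commutes]
    exact Algebra.TensorProduct.lift_tmul ..
  have hΦsmul (f : F) (x : L ⊗[k] F) : Φ (f • x) = f • Φ x := by
    induction x with
    | zero => simp
    | add x y hx hy => simp only [smul_add, map_add, hx, hy]
    | tmul l g =>
      rw [Algebra.smul_def, Algebra.TensorProduct.right_algebraMap_apply,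
        Algebra.TensorProduct.tmul_mul_tmul, one_mul, hΦ, hΦ, mul_smul]
  have hτ (x : L ⊗[k] F) : u * Φ x = Φ (tensorTwist F σ x) * u := by
    induction x with
    | zero => simp
    | add x y hx hy => simp only [mul_add, add_mul, map_add, hx, hy]
    | tmul l g => rw [tensorTwist_tmul, hΦ, hΦ, mul_smul_comm, h.gen_mul, smul_mul_assoc]
  let e : L ⊗[k] F →ₗ[F] S :=
    { toFun := fun x ↦ Φ x v
      map_add' := fun x y ↦ by simp
      map_smul' := fun f x ↦ by simp [hΦsmul] }
  have he : Function.Injective e := by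
    refine (injective_iff_map_eq_zero e).2 fun x hx ↦ ?_
    have hsum : x = ∑ j, (pb.tensorBasis F).repr x j • (pb.gen ^ (j : ℕ)) ⊗ₜ[k] (1 : F) := by
      conv_lhs => rw [← (pb.tensorBasis F).sum_repr x]
      simp only [PowerBasis.tensorBasis_apply]
    have hΦx : Φ x = ∑ j, (pb.tensorBasis F).repr x j • ι (pb.gen ^ (j : ℕ)) := by
      conv_lhs => rw [hsum]
      simp [hΦsmul, hΦ]
    have hzero : Φ x = 0 := by
      have := hv (∑ j, Polynomial.C ((pb.tensorBasis F).repr x j) * Polynomial.X ^ (j : ℕ))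
      simp only [map_sum, map_mul, Polynomial.aeval_C, Polynomial.aeval_X, map_pow,
        ← Algebra.smul_def] at this
      simp only [map_pow] at hΦx
      rw [hΦx]
      exact this (hΦx ▸ hx)
    rw [hΦx] at hzero
    have := h.eq_zero_of_sum_smul_eq_zero hσ hβ _ hzero
    rw [hsum]
    simp [this]
  have hsurj : Function.Surjective e := by
    have : FiniteDimensional F (L ⊗[k] F) := Module.Finite.of_basis (pb.tensorBasis F)
    refine (LinearMap.injective_iff_surjective_of_finrank_eq_finrank ?_).1 he
    rw [hS, Module.finrank_eq_card_basis (pb.tensorBasis F), Fintype.card_fin]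
  obtain ⟨c, hc⟩ := hsurj (u v)
  have hpow (i : ℕ) : (u ^ i) v = Φ (∏ j ∈ Finset.range i, tensorTwist F (σ ^ j) c) v := by
    induction i with
    | zero => simp
    | succ i ih =>
      rw [pow_succ', Module.End.mul_apply, ih, ← Module.End.mul_apply, hτ, Module.End.mul_apply,
        ← hc]
      change Φ _ (Φ c v) = _
      rw [← Module.End.mul_apply, ← map_mul, Finset.prod_range_succ', map_prod]
      simp [← tensorTwist_pow_apply, Function.iterate_succ_apply']
  refine ⟨c, he ?_⟩
  change Φ (∏ j ∈ Finset.range pb.dim, tensorTwist F (σ ^ j) c) v =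
    Φ (algebraMap k (L ⊗[k] F) β) v
  rw [← hpow, h.pow_eq, AlgHom.commutes]

end CyclicVector

section Isotypic

theorem IsSimpleRing.finrank_dvd_finrank {k A S M : Type*} [Field k] [Ring A] [Algebra k A]
    [IsSimpleRing A] [IsArtinianRing A] [AddCommGroup S] [Module k S] [Module A S]
    [IsScalarTower k A S] [IsSimpleModule A S] [FiniteDimensional k S] [AddCommGroup M]
    [Module k M] [Module A M] [IsScalarTower k A M] [FiniteDimensional k M] :
    Module.finrank k S ∣ Module.finrank k M := by
  have hM : IsIsotypicOfType A M S := fun m _ ↦ by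
    obtain ⟨I, ⟨e⟩⟩ := IsSemisimpleRing.exists_linearEquiv_ideal_of_isSimpleModule A S
    obtain ⟨J, ⟨e'⟩⟩ := IsSemisimpleRing.exists_linearEquiv_ideal_of_isSimpleModule A m
    have := IsSimpleModule.congr e.symm
    have := IsSimpleModule.congr e'.symm
    obtain ⟨f⟩ := IsSimpleRing.isIsotypic A A I J
    exact ⟨e'.trans (f.trans e.symm)⟩
  have : Module.Finite A M := .of_restrictScalars_finite k A M
  obtain ⟨r, ⟨e⟩⟩ := hM.linearEquiv_fun
  rw [(e.restrictScalars k).finrank_eq, Module.finrank_pi_fintype]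
  simp

end Isotypic

section SeparableEndomorphism

variable {F B S : Type*} [Field F] [Ring B] [Algebra F B] [AddCommGroup S] [Module F S]
  [Module B S] [IsScalarTower F B S]

theorem Module.End.finite_of_isScalarTower [FiniteDimensional F S] :
    Module.Finite F (Module.End B S) :=
  Module.Finite.of_injective (LinearMap.restrictScalarsₗ F B S S F)
    (LinearMap.restrictScalars_injective F)

theorem Module.End.module_finite_of_isScalarTower [FiniteDimensional F S] :
    Module.Finite (Module.End B S) S :=
  .of_restrictScalars_finite F (Module.End B S) S

/-- The endomorphism ring of a faithful simple module over a central algebra is central. -/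
theorem IsSimpleModule.isCentral_moduleEnd [FiniteDimensional F S] [FaithfulSMul B S]
    [IsSimpleModule B S] [Algebra.IsCentral F B] : Algebra.IsCentral F (Module.End B S) where
  out z hz := by
    have := Module.End.module_finite_of_isScalarTower (F := F) (B := B) (S := S)
    rw [Subalgebra.mem_center_iff] at hz
    let z' : Module.End (Module.End B S) S :=
      { toFun := z
        map_add' := map_add z
        map_smul' := fun g s ↦ LinearMap.congr_fun (hz g).symm s }
    obtain ⟨b, hb⟩ := Module.Finite.toModuleEnd_moduleEnd_surjective (R := B) z'
    have hbz (s : S) : b • s = z s := LinearMap.congr_fun hb s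
    have hcenter : b ∈ Subalgebra.center F B := by
      refine Subalgebra.mem_center_iff.2 fun b' ↦ FaithfulSMul.eq_of_smul_eq_smul fun s : S ↦ ?_
      rw [mul_smul, mul_smul, hbz, hbz, map_smul]
    obtain ⟨f, rfl⟩ := Algebra.mem_bot.1 (Algebra.IsCentral.out hcenter)
    refine Algebra.mem_bot.2 ⟨f, LinearMap.ext fun s ↦ ?_⟩
    rw [← hbz, algebraMap_smul, Module.algebraMap_end_apply]

/-- Either `B` is all of `Module.End F S`, or, by the Jacobson-Noether theorem, some `B`-linear
endomorphism of `S` other than a scalar is separable over `F`. -/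
theorem IsSimpleModule.finrank_eq_or_exists_isSeparable [FiniteDimensional F S] [FaithfulSMul B S]
    [IsSimpleModule B S] [Algebra.IsCentral F B] :
    Module.finrank F B = Module.finrank F S * Module.finrank F S ∨
      ∃ x : Module.End B S, x ∉ (algebraMap F (Module.End B S)).range ∧ IsSeparable F x := by
  classical
  have := Module.End.module_finite_of_isScalarTower (F := F) (B := B) (S := S)
  have := Module.End.finite_of_isScalarTower (F := F) (B := B) (S := S)
  have := IsSimpleModule.isCentral_moduleEnd (F := F) (B := B) (S := S)
  by_cases htop : (⊥ : Subalgebra F (Module.End B S)) = ⊤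
  · left
    have hinj : Function.Injective (Algebra.lsmul F F S : B →ₐ[F] Module.End F S) :=
      fun b b' hbb' ↦ FaithfulSMul.eq_of_smul_eq_smul fun s : S ↦ LinearMap.congr_fun hbb' s
    have hsurj : Function.Surjective (Algebra.lsmul F F S : B →ₐ[F] Module.End F S) := by
      intro g
      let g' : Module.End (Module.End B S) S :=
        { toFun := g
          map_add' := map_add g
          map_smul' := fun x s ↦ by
            obtain ⟨f, rfl⟩ := Algebra.mem_bot.1 (htop ▸ Algebra.mem_top : x ∈ ⊥)
            exact map_smul g f s }
      obtain ⟨b, hb⟩ := Module.Finite.toModuleEnd_moduleEnd_surjective (R := B) g'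
      exact ⟨b, LinearMap.ext fun s ↦ LinearMap.congr_fun hb s⟩
    rw [← Module.finrank_linearMap F F S S]
    exact (LinearEquiv.ofBijective (Algebra.lsmul F F S : B →ₐ[F] Module.End F S).toLinearMap
      ⟨hinj, hsurj⟩).finrank_eq
  · right
    exact JacobsonNoether.exists_separable_and_not_isCentral' htop

end SeparableEndomorphism

section SeparableExtension

/-- A separable element of a domain over `F`, not a scalar, generates a proper extension of `F`. -/
theorem IsSeparable.exists_algHom_finrank_lt (k : Type*) {F : Type} {E : Type*} [Field k] [Field F]
    [Algebra k F] [FiniteDimensional k F] [Algebra.IsSeparable k F] [Ring E] [IsDomain E]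
    [Algebra k E] [Algebra F E] [IsScalarTower k F E] {x : E} (hx : IsSeparable F x)
    (hxF : x ∉ (algebraMap F E).range) :
    ∃ (K : Type) (_ : Field K) (_ : Algebra k K), FiniteDimensional k K ∧
      Algebra.IsSeparable k K ∧ Nonempty (K →ₐ[k] E) ∧
      Module.finrank k F < Module.finrank k K := by
  have hxint : IsIntegral F x := hx.isIntegral
  have hirr : Fact (Irreducible (minpoly F x)) := ⟨minpoly.irreducible hxint⟩
  let pb := AdjoinRoot.powerBasis (minpoly.ne_zero hxint)
  have hdim : 2 ≤ pb.dim := (minpoly.two_le_natDegree_iff hxint).2 hxF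
  have hfin : FiniteDimensional F (AdjoinRoot (minpoly F x)) := pb.finite
  have hsep : Algebra.IsSeparable F (AdjoinRoot (minpoly F x)) := by
    have hroot : IsSeparable F (AdjoinRoot.root (minpoly F x)) :=
      Polynomial.Separable.of_dvd hx (minpoly.dvd F _ (by simp))
    have htop : IntermediateField.adjoin F {AdjoinRoot.root (minpoly F x)} = ⊤ :=
      IntermediateField.adjoin_eq_top_of_algebra _ _ AdjoinRoot.adjoinRoot_eq_top
    rw [← IntermediateField.isSeparable_adjoin_simple_iff_isSeparable, htop] at hroot
    exact .of_algHom F _ IntermediateField.topEquiv.symm.toAlgHom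
  let ψ : AdjoinRoot (minpoly F x) →ₐ[F] E :=
    Ideal.Quotient.liftₐ _ (Polynomial.aeval x) fun p hp ↦ by
      obtain ⟨q, rfl⟩ := Ideal.mem_span_singleton.1 hp
      simp
  refine ⟨AdjoinRoot (minpoly F x), inferInstance, inferInstance,
    FiniteDimensional.trans k F _, .trans k F _, ⟨ψ.restrictScalars k⟩, ?_⟩
  rw [← Module.finrank_mul_finrank k F (AdjoinRoot (minpoly F x)), pb.finrank]
  have := Module.finrank_pos (R := k) (M := F)
  nlinarith

end SeparableExtension

section SplittingField

variable {k L : Type} [Field k] [Field L] [Algebra k L] {σ : L ≃ₐ[k] L} {pb : PowerBasis k L}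
  {β : k} {S : Type} [AddCommGroup S] [Module k S] [Module (CyclicAlgebra σ pb.dim β) S]
  [IsScalarTower k (CyclicAlgebra σ pb.dim β) S]

namespace CyclicAlgebra

/-- A separable subfield `F` of the endomorphism ring of a simple module `S` over the cyclic
algebra either has the right degree to split the algebra, or is not maximal. -/
theorem finrank_eq_or_exists_algHom [FiniteDimensional k S]
    [IsSimpleModule (CyclicAlgebra σ pb.dim β) S] (hσ : orderOf σ = pb.dim) (hβ : β ≠ 0)
    {F : Type} [Field F] [Algebra k F] [FiniteDimensional k F] [Algebra.IsSeparable k F]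
    [Module F S] [IsScalarTower k F S] [SMulCommClass (CyclicAlgebra σ pb.dim β) F S] :
    Module.finrank F S = pb.dim ∨
      ∃ (K : Type) (_ : Field K) (_ : Algebra k K), FiniteDimensional k K ∧
        Algebra.IsSeparable k K ∧
        Nonempty (K →ₐ[k] Module.End (CyclicAlgebra σ pb.dim β) S) ∧
        Module.finrank k F < Module.finrank k K := by
  classical
  have : FiniteDimensional F S := .of_restrictScalars_finite k F S
  have : Nontrivial S := IsSimpleModule.nontrivial (CyclicAlgebra σ pb.dim β) S
  let ρ : CyclicAlgebra σ pb.dim β →ₐ[k] Module.End F S := Algebra.lsmul k F S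
  let ι := ρ.comp (ofField σ pb.dim β)
  let u := ρ (gen σ pb.dim β)
  have h : CyclicRelations σ pb.dim β ι u := (relations σ pb.dim β).map ρ
  let B : Subalgebra F (Module.End F S) := Algebra.adjoin F (insert u (Set.range ι))
  have hι (l : L) : ι l ∈ B := Algebra.subset_adjoin (Set.mem_insert_of_mem _ ⟨l, rfl⟩)
  have hu : u ∈ B := Algebra.subset_adjoin (Set.mem_insert _ _)
  have hρ (a : CyclicAlgebra σ pb.dim β) : ρ a ∈ B := by
    have hle : (⊤ : Subalgebra k (CyclicAlgebra σ pb.dim β)) ≤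
        (B.restrictScalars k).comap ρ := by
      rw [← adjoin_eq_top, Algebra.adjoin_le_iff]
      rintro _ (rfl | ⟨l, rfl⟩)
      exacts [hu, hι l]
    exact hle Algebra.mem_top
  let ι' : L →ₐ[k] B := ι.codRestrict (B.restrictScalars k) hι
  let u' : B := ⟨u, hu⟩
  have h' : CyclicRelations σ pb.dim β ι' u' :=
    { gen_mul := fun l ↦ Subtype.ext (h.gen_mul l)
      pow_eq := Subtype.ext h.pow_eq }
  have hgen : Algebra.adjoin F (insert u' (Set.range ι')) = ⊤ := by
    rw [← Algebra.adjoin_adjoin_coe_preimage (R := F) (s := insert u (Set.range ι))]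
    congr 1
    ext b
    simp only [Set.mem_insert_iff, Set.mem_range, Set.mem_preimage, Subtype.ext_iff]
    rfl
  have := h'.isCentral hσ hβ hgen
  let restrict (x : Module.End B S) : Module.End (CyclicAlgebra σ pb.dim β) S :=
    { toFun := x
      map_add' := map_add x
      map_smul' := fun a s ↦ map_smul x (⟨ρ a, hρ a⟩ : B) s }
  have : IsSimpleModule B S := by
    refine { eq_bot_or_eq_top := fun N ↦ ?_ }
    let N' : Submodule (CyclicAlgebra σ pb.dim β) S :=
      { N with smul_mem' := fun a s hs ↦ N.smul_mem (⟨ρ a, hρ a⟩ : B) hs }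
    refine (eq_bot_or_eq_top N').imp (fun hN ↦ ?_) fun hN ↦ ?_
    all_goals exact SetLike.ext fun s ↦ SetLike.ext_iff.1 hN s
  obtain hB | ⟨x, hxF, hx⟩ := IsSimpleModule.finrank_eq_or_exists_isSeparable (F := F) (B := B)
    (S := S)
  · rw [h'.finrank_eq hσ hβ hgen] at hB
    exact .inl (Nat.mul_self_inj.1 hB.symm)
  · right
    obtain ⟨K, _, _, hfin, hsep, ⟨ψ⟩, hlt⟩ := hx.exists_algHom_finrank_lt k hxF
    refine ⟨K, inferInstance, inferInstance, hfin, hsep, ⟨?_⟩, hlt⟩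
    let restrictHom : Module.End B S →ₐ[k] Module.End (CyclicAlgebra σ pb.dim β) S :=
      { toFun := restrict
        map_one' := rfl
        map_mul' := fun _ _ ↦ rfl
        map_zero' := rfl
        map_add' := fun _ _ ↦ rfl
        commutes' := fun _ ↦ rfl }
    exact restrictHom.comp ψ

theorem exists_isBaseNorm_finrank_mul_eq [FiniteDimensional k S]
    [IsSimpleModule (CyclicAlgebra σ pb.dim β) S] (hσ : orderOf σ = pb.dim) (hβ : β ≠ 0) :
    ∃ (F : Type) (_ : Field F) (_ : Algebra k F), FiniteDimensional k F ∧
      Algebra.IsSeparable k F ∧ IsBaseNorm k L F β ∧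
      Module.finrank k F * pb.dim = Module.finrank k S := by
  classical
  let D := Module.End (CyclicAlgebra σ pb.dim β) S
  have : Module.Finite k D := Module.End.finite_of_isScalarTower
  let degrees : Set ℕ := {d | ∃ (F : Type) (_ : Field F) (_ : Algebra k F),
    FiniteDimensional k F ∧ Algebra.IsSeparable k F ∧ Nonempty (F →ₐ[k] D) ∧
    Module.finrank k F = d}
  have hne : degrees.Nonempty :=
    ⟨_, k, inferInstance, inferInstance, inferInstance, inferInstance, ⟨Algebra.ofId k D⟩, rfl⟩
  have hbdd : BddAbove degrees := by
    refine ⟨Module.finrank k D, ?_⟩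
    rintro _ ⟨F, _, _, _, _, ⟨φ⟩, rfl⟩
    exact LinearMap.finrank_le_finrank_of_injective (f := φ.toLinearMap) φ.toRingHom.injective
  obtain ⟨F, _, _, hfin, hsep, ⟨φ⟩, hF⟩ := Nat.sSup_mem hne hbdd
  let : Module F S := Module.compHom S φ.toRingHom
  have hsmul (f : F) (s : S) : f • s = φ f s := rfl
  have : IsScalarTower k F S := ⟨fun c f s ↦ by rw [hsmul, map_smul]; rfl⟩
  have : SMulCommClass (CyclicAlgebra σ pb.dim β) F S := ⟨fun a f s ↦ by simp [hsmul]⟩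
  have : FiniteDimensional F S := .of_restrictScalars_finite k F S
  obtain hS | ⟨K, _, _, hKfin, hKsep, hK, hlt⟩ :=
    finrank_eq_or_exists_algHom (S := S) (F := F) hσ hβ
  · refine ⟨F, inferInstance, inferInstance, hfin, hsep, ?_, ?_⟩
    · let ρ : CyclicAlgebra σ pb.dim β →ₐ[k] Module.End F S := Algebra.lsmul k F S
      exact (isBaseNorm_iff pb hσ hβ).2 (((relations σ pb.dim β).map ρ).exists_prod_eq hσ hβ hS)
    · rw [← hS, Module.finrank_mul_finrank]
  · exact absurd (le_csSup hbdd ⟨K, _, _, hKfin, hKsep, hK, rfl⟩) (hF ▸ not_le.2 hlt)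

theorem finrank_dvd_of_isBaseNorm [FiniteDimensional k S]
    [IsSimpleRing (CyclicAlgebra σ pb.dim β)] [IsArtinianRing (CyclicAlgebra σ pb.dim β)]
    [IsSimpleModule (CyclicAlgebra σ pb.dim β) S] (hσ : orderOf σ = pb.dim) (hβ : β ≠ 0)
    {F : Type} [Field F] [Algebra k F] [FiniteDimensional k F] (hF : IsBaseNorm k L F β) :
    Module.finrank k S ∣ Module.finrank k F * pb.dim := by
  obtain ⟨c, hc⟩ := (isBaseNorm_iff pb hσ hβ).1 hF
  have : FiniteDimensional k L := pb.finite
  let ρ : CyclicAlgebra σ pb.dim β →ₐ[k] Module.End k (L ⊗[k] F) :=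
    lift (cyclicRelations_mulTwist (hσ ▸ pow_orderOf_eq_one σ) hc)
  let : Module (CyclicAlgebra σ pb.dim β) (L ⊗[k] F) := Module.compHom _ ρ.toRingHom
  have hsmul (a : CyclicAlgebra σ pb.dim β) (x : L ⊗[k] F) : a • x = ρ a x := rfl
  have : IsScalarTower k (CyclicAlgebra σ pb.dim β) (L ⊗[k] F) :=
    ⟨fun r a x ↦ by rw [hsmul, hsmul, map_smul, LinearMap.smul_apply]⟩
  have hdvd := IsSimpleRing.finrank_dvd_finrank (k := k) (A := CyclicAlgebra σ pb.dim β) (S := S)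
    (M := L ⊗[k] F)
  rwa [Module.finrank_tensorProduct, pb.finrank, mul_comm] at hdvd

end CyclicAlgebra

end SplittingField

theorem stmt12 (k L : Type) [Field k] [Field L] [Algebra k L]
    [FiniteDimensional k L] [IsGalois k L] [IsCyclic (L ≃ₐ[k] L)]
    (β : kˣ) :
    ∃ (F : Type) (_ : Field F) (_ : Algebra k F),
      FiniteDimensional k F ∧ Algebra.IsSeparable k F ∧
      IsBaseNorm k L F (β : k) ∧
      ∀ (F' : Type) (_ : Field F') (_ : Algebra k F'),
        FiniteDimensional k F' → Algebra.IsSeparable k F' →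
        IsBaseNorm k L F' (β : k) →
        Module.finrank k F ∣ Module.finrank k F' := by
  obtain ⟨σ, hgenerator⟩ := IsCyclic.exists_generator (α := L ≃ₐ[k] L)
  let pb := Field.powerBasisOfFiniteOfSeparable k L
  have hσ : orderOf σ = pb.dim := orderOf_eq_dim_of_generator hgenerator pb
  have hβ : (β : k) ≠ 0 := β.ne_zero
  have hrel := CyclicAlgebra.relations σ pb.dim (β : k)
  have hgen := CyclicAlgebra.adjoin_eq_top σ pb.dim (β : k)
  have : Nontrivial (CyclicAlgebra σ pb.dim (β : k)) :=
    CyclicAlgebra.nontrivial (hσ ▸ pow_orderOf_eq_one σ) pb.dim_pos.ne' _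
  have : IsSimpleRing (CyclicAlgebra σ pb.dim (β : k)) := hrel.isSimpleRing hσ hβ hgen
  have : FiniteDimensional k (CyclicAlgebra σ pb.dim (β : k)) :=
    Module.Finite.of_basis (hrel.basis hσ hβ hgen)
  have : IsArtinianRing (CyclicAlgebra σ pb.dim (β : k)) := .of_finite k _
  obtain ⟨S, hS⟩ := IsAtomic.exists_atom (Ideal (CyclicAlgebra σ pb.dim (β : k)))
  have : IsSimpleModule (CyclicAlgebra σ pb.dim (β : k)) S := isSimpleModule_iff_isAtom.2 hS
  have : FiniteDimensional k S :=
    Module.Finite.of_injective (S.subtype.restrictScalars k) Subtype.val_injective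
  obtain ⟨F, _, _, hfin, hsep, hF, hdeg⟩ :=
    CyclicAlgebra.exists_isBaseNorm_finrank_mul_eq (S := S) hσ hβ
  refine ⟨F, _, _, hfin, hsep, hF, fun F' _ _ _ _ hF' ↦ ?_⟩
  have hdvd := CyclicAlgebra.finrank_dvd_of_isBaseNorm (S := S) hσ hβ hF'
  rw [← hdeg] at hdvd
  exact Nat.dvd_of_mul_dvd_mul_right pb.dim_pos hdvd
end
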